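/- arXiv:1412.7905 — 2 statements merged into one kernel-verified Lean document; each statement's English description precedes it below -/
import Mathlib

section
/- For every d×d positive semidefinite complex matrices A_1, …, A_m, the matrix Z_p := (A_1^{p/2} A_2^{p/2} ⋯ A_{m-1}^{p/2} A_m^p A_{m-1}^{p/2} ⋯ A_2^{p/2} A_1^{p/2})^{1/p} converges as p → ∞. -/
open Matrix Filter Topology Finset
open scoped ComplexOrder

/-- Functional-calculus power of a (Hermitian, in practice positive semidefinite)
matrix, with the convention `0 ^ r = 0` for `r > 0`. -/
noncomputable def psdPow {d : ℕ} (A : Matrix (Fin d) (Fin d) ℂ) (r : ℝ) :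
    Matrix (Fin d) (Fin d) ℂ :=
  if hA : A.IsHermitian then
    (hA.eigenvectorUnitary : Matrix (Fin d) (Fin d) ℂ) *
      Matrix.diagonal (fun i => ((hA.eigenvalues i ^ r : ℝ) : ℂ)) *
      star (hA.eigenvectorUnitary : Matrix (Fin d) (Fin d) ℂ)
  else 0

/-- The eigenvalues of a Hermitian matrix, sorted in decreasing order
(with multiplicities). -/
noncomputable def eigsDesc {d : ℕ} (A : Matrix (Fin d) (Fin d) ℂ) : Fin d → ℝ :=
  if hA : A.IsHermitian then
    fun i => hA.eigenvalues (Tuple.sort hA.eigenvalues i.rev)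
  else 0

/-- For `n + 1` matrices `A_0, …, A_n`, this is
`Z_p = (A_0^{p/2} A_1^{p/2} ⋯ A_{n-1}^{p/2} A_n^p A_{n-1}^{p/2} ⋯ A_1^{p/2} A_0^{p/2})^{1/p}`. -/
noncomputable def ZmatM {d n : ℕ} (A : Fin (n + 1) → Matrix (Fin d) (Fin d) ℂ)
    (p : ℝ) : Matrix (Fin d) (Fin d) ℂ :=
  psdPow ((List.ofFn fun l : Fin n => psdPow (A l.castSucc) (p / 2)).prod *
    psdPow (A (Fin.last n)) p *
    ((List.ofFn fun l : Fin n => psdPow (A l.castSucc) (p / 2)).reverse).prod) (1 / p)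

/-- exponential functions -/
noncomputable def expHomES : Multiplicative ℝ →* (ℝ → ℂ) where
  toFun m := fun p => Complex.exp ((Multiplicative.toAdd m * p : ℝ) : ℂ)
  map_one' := by ext p; simp
  map_mul' a b := by
    ext p
    simp only [toAdd_mul, Pi.mul_apply, ← Complex.exp_add]
    push_cast
    ring_nf

/-- exponential sums -/
noncomputable def algES : Subalgebra ℂ (ℝ → ℂ) :=
  Algebra.adjoin ℂ ((MonoidHom.mrange expHomES : Submonoid (ℝ → ℂ)) : Set (ℝ → ℂ))

/-- functions that agree with an exponential sum on the positive half-line -/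
def IsES (f : ℝ → ℂ) : Prop := ∃ g ∈ algES, ∀ p > 0, f p = g p

lemma IsES.add {f g : ℝ → ℂ} (hf : IsES f) (hg : IsES g) : IsES (fun p => f p + g p) := by
  obtain ⟨f', hf', h1⟩ := hf
  obtain ⟨g', hg', h2⟩ := hg
  exact ⟨f' + g', add_mem hf' hg', fun p hp => by simp [h1 p hp, h2 p hp]⟩

lemma IsES.mul {f g : ℝ → ℂ} (hf : IsES f) (hg : IsES g) : IsES (fun p => f p * g p) := by
  obtain ⟨f', hf', h1⟩ := hf
  obtain ⟨g', hg', h2⟩ := hg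
  exact ⟨f' * g', mul_mem hf' hg', fun p hp => by simp [h1 p hp, h2 p hp]⟩

lemma isES_const (c : ℂ) : IsES (fun _ => c) :=
  ⟨algebraMap ℂ (ℝ → ℂ) c, algebraMap_mem _ _, fun p _ => by simp⟩

lemma isES_sum {ι : Type*} (s : Finset ι) {f : ι → ℝ → ℂ} (h : ∀ i ∈ s, IsES (f i)) :
    IsES (fun p => ∑ i ∈ s, f i p) := by
  classical
  induction s using Finset.induction_on with
  | empty => simpa using isES_const 0
  | insert a s ha ih =>
    simp only [Finset.sum_insert ha]
    exact (h a (by simp)).add (ih fun i hi => h i (by simp [hi]))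

lemma isES_prod {ι : Type*} (s : Finset ι) {f : ι → ℝ → ℂ} (h : ∀ i ∈ s, IsES (f i)) :
    IsES (fun p => ∏ i ∈ s, f i p) := by
  classical
  induction s using Finset.induction_on with
  | empty => simpa using isES_const 1
  | insert a s ha ih =>
    simp only [Finset.prod_insert ha]
    exact (h a (by simp)).mul (ih fun i hi => h i (by simp [hi]))

lemma isES_rpow {b : ℝ} (hb : 0 ≤ b) {a : ℝ} (ha : 0 < a) :
    IsES (fun p => ((b ^ (p * a) : ℝ) : ℂ)) := by
  rcases hb.eq_or_lt with rfl | hb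
  · refine ⟨0, zero_mem _, fun p hp => ?_⟩
    have : p * a ≠ 0 := (mul_pos hp ha).ne'
    simp only [Real.zero_rpow this]
    simp
  · refine ⟨expHomES (Multiplicative.ofAdd (Real.log b * a)),
      Algebra.subset_adjoin ⟨_, rfl⟩, fun p hp => ?_⟩
    simp only [expHomES, MonoidHom.coe_mk, OneHom.coe_mk, toAdd_ofAdd]
    rw [Real.rpow_def_of_pos hb, ← Complex.ofReal_exp]
    congr 2
    ring

lemma IsES.asymp {f : ℝ → ℂ} (hf : IsES f) : (∀ p > 0, f p = 0) ∨
    ∃ l : ℝ, ∃ c : ℂ, c ≠ 0 ∧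
      Tendsto (fun p => f p * Complex.exp ((-l * p : ℝ) : ℂ)) atTop (𝓝 c) := by
  classical
  obtain ⟨g, hg, hfg⟩ := hf
  have hg' : g ∈ Submodule.span ℂ (Set.range expHomES) := by
    rw [algES, ← Subalgebra.mem_toSubmodule, Algebra.adjoin_eq_span, Submonoid.closure_eq] at hg
    simpa using hg
  obtain ⟨c, hc⟩ := Finsupp.mem_span_range_iff_exists_finsupp.1 hg'
  by_cases h0 : c = 0
  · left
    intro p hp
    rw [hfg p hp, ← hc, h0]
    simp
  · right
    have hne : c.support.Nonempty := Finsupp.support_nonempty_iff.2 h0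
    obtain ⟨m, hm, hmax⟩ := c.support.exists_max_image (fun x => Multiplicative.toAdd x) hne
    refine ⟨Multiplicative.toAdd m, c m, Finsupp.mem_support_iff.1 hm, ?_⟩
    have key : Tendsto (fun p : ℝ => ∑ x ∈ c.support,
        c x * Complex.exp (((Multiplicative.toAdd x - Multiplicative.toAdd m) * p : ℝ) : ℂ)) atTop
        (𝓝 (∑ x ∈ c.support, if x = m then c m else 0)) := by
      refine tendsto_finsetSum _ fun x hx => ?_
      split_ifs with h
      · subst h
        simp
      · have hlt : Multiplicative.toAdd x - Multiplicative.toAdd m < 0 := by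
          have h1 := hmax x hx
          have h2 : Multiplicative.toAdd x ≠ Multiplicative.toAdd m :=
            fun h' => h (Multiplicative.toAdd.injective h')
          have := lt_of_le_of_ne h1 h2
          linarith
        have h3 : Tendsto (fun p : ℝ => Real.exp
            ((Multiplicative.toAdd x - Multiplicative.toAdd m) * p)) atTop (𝓝 0) :=
          Real.tendsto_exp_atBot.comp (tendsto_id.const_mul_atTop_of_neg hlt)
        have h4 := (Complex.continuous_ofReal.tendsto 0).comp h3
        have h5 := h4.const_mul (c x)
        simpa [Function.comp_def] using h5
    rw [Finset.sum_ite_eq' c.support m (fun _ => c m), if_pos hm] at key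
    refine key.congr' ?_
    filter_upwards [eventually_gt_atTop 0] with p hp
    rw [hfg p hp, ← hc, Finsupp.sum, Finset.sum_apply, Finset.sum_mul]
    refine Finset.sum_congr rfl fun x _ => ?_
    simp only [expHomES, MonoidHom.coe_mk, OneHom.coe_mk, Pi.smul_apply, smul_eq_mul, mul_assoc,
      ← Complex.exp_add]
    push_cast
    ring_nf

lemma IsES.bound {f : ℝ → ℂ} (hf : IsES f) :
    ∃ C : ℝ, ∃ l : ℝ, 1 ≤ C ∧ ∀ᶠ p in atTop, ‖f p‖ ≤ C * Real.exp (l * p) := by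
  rcases hf.asymp with h | ⟨l, c, -, h⟩
  · refine ⟨1, 0, le_rfl, ?_⟩
    filter_upwards [eventually_gt_atTop 0] with p hp
    simp [h p hp]
  · refine ⟨‖c‖ + 1, l, by linarith [norm_nonneg c], ?_⟩
    have := h.norm.eventually_le_const (lt_add_one ‖c‖)
    filter_upwards [this] with p hp
    rw [norm_mul, Complex.norm_exp, Complex.ofReal_re, neg_mul, Real.exp_neg] at hp
    rwa [← div_eq_mul_inv, div_le_iff₀ (Real.exp_pos _)] at hp

lemma ratio_tendsto {f g : ℝ → ℂ} (hf : IsES f) (hg : IsES g)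
    (hg0 : ∀ p > 0, g p ≠ 0) {C : ℝ} (hC : ∀ p > 0, ‖f p / g p‖ ≤ C) :
    ∃ z, Tendsto (fun p => f p / g p) atTop (𝓝 z) := by
  rcases hf.asymp with h | ⟨l, c, hc, h⟩
  · refine ⟨0, tendsto_const_nhds.congr' ?_⟩
    filter_upwards [eventually_gt_atTop 0] with p hp
    simp [h p hp]
  rcases hg.asymp with h' | ⟨l', c', hc', h'⟩
  · exact absurd (h' 1 one_pos) (hg0 1 one_pos)
  have hq := h.div h' hc'
  have heq : ∀ p, f p * Complex.exp ((-l * p : ℝ) : ℂ) / (g p * Complex.exp ((-l' * p : ℝ) : ℂ))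
      = f p / g p * Complex.exp (((l' - l) * p : ℝ) : ℂ) := by
    intro p
    rw [mul_div_mul_comm, ← Complex.exp_sub]
    push_cast
    ring_nf
  simp only [Pi.div_def, heq] at hq
  rcases lt_trichotomy l l' with hl | hl | hl
  · have h3 : Tendsto (fun p : ℝ => Real.exp ((l - l') * p)) atTop (𝓝 0) :=
      Real.tendsto_exp_atBot.comp (tendsto_id.const_mul_atTop_of_neg (by linarith))
    have h4 := (Complex.continuous_ofReal.tendsto 0).comp h3
    refine ⟨_, (hq.mul h4).congr fun p => ?_⟩
    simp only [Function.comp, Complex.ofReal_exp]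
    rw [mul_assoc, ← Complex.exp_add]
    push_cast
    ring_nf
    simp
  · subst hl
    refine ⟨_, hq.congr fun p => ?_⟩
    simp
  · exfalso
    have h3 : Tendsto (fun p : ℝ => Real.exp ((l' - l) * p)) atTop (𝓝 0) :=
      Real.tendsto_exp_atBot.comp (tendsto_id.const_mul_atTop_of_neg (by linarith))
    have h5 : Tendsto (fun p => f p / g p * Complex.exp (((l' - l) * p : ℝ) : ℂ)) atTop (𝓝 0) := by
      refine squeeze_zero_norm' ?_ (by simpa using h3.const_mul C)
      filter_upwards [eventually_gt_atTop 0] with p hp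
      rw [norm_mul, Complex.norm_exp, Complex.ofReal_re]
      exact mul_le_mul_of_nonneg_right (hC p hp) (Real.exp_pos _).le
    have := tendsto_nhds_unique hq h5
    exact (div_ne_zero hc hc') this

/-- matrix valued exponential sums -/
def IsESM {d : ℕ} (M : ℝ → Matrix (Fin d) (Fin d) ℂ) : Prop := ∀ i j, IsES (fun p => M p i j)

lemma IsESM.add {d : ℕ} {M N : ℝ → Matrix (Fin d) (Fin d) ℂ} (hM : IsESM M) (hN : IsESM N) :
    IsESM (fun p => M p + N p) := fun i j => (hM i j).add (hN i j)

lemma IsESM.mul {d : ℕ} {M N : ℝ → Matrix (Fin d) (Fin d) ℂ} (hM : IsESM M) (hN : IsESM N) :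
    IsESM (fun p => M p * N p) := fun i j => by
  simp only [Matrix.mul_apply]
  exact isES_sum _ fun k _ => (hM i k).mul (hN k j)

lemma isESM_const {d : ℕ} (M : Matrix (Fin d) (Fin d) ℂ) : IsESM (fun _ => M) :=
  fun i j => isES_const _

lemma IsESM.det {d : ℕ} {M : ℝ → Matrix (Fin d) (Fin d) ℂ} (hM : IsESM M) :
    IsES (fun p => (M p).det) := by
  simp only [Matrix.det_apply']
  exact isES_sum _ fun s _ => (isES_const _).mul (isES_prod _ fun i _ => hM _ _)

lemma IsESM.adjugate {d : ℕ} {M : ℝ → Matrix (Fin d) (Fin d) ℂ} (hM : IsESM M) :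
    IsESM (fun p => (M p).adjugate) := fun i j => by
  simp only [Matrix.adjugate_apply]
  refine IsESM.det fun a b => ?_
  simp only [Matrix.updateRow_apply]
  split_ifs
  · exact isES_const _
  · exact hM a b

lemma isESM_list_prod {d : ℕ} {ι : Type*} (L : List ι) (M : ι → ℝ → Matrix (Fin d) (Fin d) ℂ)
    (h : ∀ i, IsESM (M i)) : IsESM (fun p => (L.map fun i => M i p).prod) := by
  induction L with
  | nil => simpa using isESM_const 1
  | cons a L ih =>
    simp only [List.map_cons, List.prod_cons]
    exact (h a).mul ih

lemma isESM_psdPow {d : ℕ} {A : Matrix (Fin d) (Fin d) ℂ} (hA : A.PosSemidef) {a : ℝ}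
    (ha : 0 < a) : IsESM (fun p => psdPow A (p * a)) := by
  simp only [psdPow, dif_pos hA.isHermitian]
  refine ((isESM_const _).mul fun i j => ?_).mul (isESM_const _)
  simp only [Matrix.diagonal_apply]
  split_ifs
  · exact isES_rpow (hA.eigenvalues_nonneg _) ha
  · exact isES_const _

lemma psdPow_isHermitian {d : ℕ} (A : Matrix (Fin d) (Fin d) ℂ) (r : ℝ) :
    (psdPow A r).IsHermitian := by
  unfold psdPow
  split_ifs with h
  · rw [star_eq_conjTranspose]
    apply Matrix.isHermitian_mul_mul_conjTranspose
    rw [Matrix.isHermitian_diagonal_iff]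
    intro i
    simp [IsSelfAdjoint]
  · exact Matrix.isHermitian_zero

lemma psdPow_posSemidef {d : ℕ} {A : Matrix (Fin d) (Fin d) ℂ} (hA : A.PosSemidef) (r : ℝ) :
    (psdPow A r).PosSemidef := by
  rw [psdPow, dif_pos hA.isHermitian, star_eq_conjTranspose]
  apply Matrix.PosSemidef.mul_mul_conjTranspose_same
  rw [Matrix.posSemidef_diagonal_iff]
  intro i
  exact_mod_cast Real.rpow_nonneg (hA.eigenvalues_nonneg i) r

lemma scalar_approx {M δ : ℝ} {N : ℕ} (hM : 0 < M) (hδ : 0 < δ) (hN : N * δ = M) :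
    ∀ᶠ p : ℝ in atTop, ∀ z : ℝ, 0 ≤ z → z ≤ M →
      |z - ∑ j ∈ Finset.range N, δ * (z ^ p / (((j + 1) * δ) ^ p + z ^ p))| ≤ 3 * δ := by
  set q := M / (M + δ) with hq
  have hq0 : 0 ≤ q := by positivity
  have hq1 : q < 1 := by rw [hq, div_lt_one (by positivity)]; linarith
  have ht := tendsto_rpow_atTop_of_base_lt_one q (by linarith) hq1
  have hη : 0 < δ / M := by positivity
  filter_upwards [ht.eventually_le_const hη, eventually_gt_atTop 0] with p hp hp0 z hz hzM
  have hsum : ∑ j ∈ Finset.range N, δ * (δ / M) = δ := by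
    rw [Finset.sum_const, Finset.card_range, nsmul_eq_mul, ← mul_assoc, hN]
    field_simp
  -- upper bound
  have up : ∀ j ∈ Finset.range N, δ * (z ^ p / (((j + 1) * δ) ^ p + z ^ p)) ≤
      δ * (δ / M) + (min (z + δ) (((j + 1 : ℕ) : ℝ) * δ) - min (z + δ) ((j : ℝ) * δ)) := by
    intro j _
    have hs : 0 < ((j : ℝ) + 1) * δ := by positivity
    have hsp := Real.rpow_pos_of_pos hs p
    have hzp := Real.rpow_nonneg hz p
    push_cast
    rcases le_or_gt (((j : ℝ) + 1) * δ) (z + δ) with h | h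
    · rw [min_eq_right h, min_eq_right (by linarith)]
      have : z ^ p / (((j + 1) * δ) ^ p + z ^ p) ≤ 1 := by
        rw [div_le_one (by positivity)]; linarith
      have h2 : 0 ≤ δ * (δ / M) := by positivity
      nlinarith
    · have h1 : z ^ p / (((j + 1) * δ) ^ p + z ^ p) ≤ δ / M := by
        calc _ ≤ z ^ p / (((j + 1) * δ) ^ p) := by
              apply div_le_div_of_nonneg_left hzp hsp; linarith
          _ = (z / ((j + 1) * δ)) ^ p := (Real.div_rpow hz hs.le p).symm
          _ ≤ q ^ p := by
              apply Real.rpow_le_rpow (by positivity) _ hp0.le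
              rw [hq, div_le_div_iff₀ hs (by positivity)]
              nlinarith
          _ ≤ _ := hp
      have h2 : min (z + δ) ((j : ℝ) * δ) ≤ min (z + δ) (((j : ℝ) + 1) * δ) :=
        min_le_min le_rfl (by nlinarith)
      nlinarith
  have lo : ∀ j ∈ Finset.range N,
      (min z (((j + 1 : ℕ) : ℝ) * δ + 2 * δ) - min z ((j : ℝ) * δ + 2 * δ)) - δ * (δ / M) ≤
      δ * (z ^ p / (((j + 1) * δ) ^ p + z ^ p)) := by
    intro j _
    have hs : 0 < ((j : ℝ) + 1) * δ := by positivity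
    have hsp := Real.rpow_pos_of_pos hs p
    have hzp := Real.rpow_nonneg hz p
    push_cast
    rcases le_or_gt z ((j : ℝ) * δ + 2 * δ) with h | h
    · rw [min_eq_left h, min_eq_left (by linarith)]
      have : 0 ≤ δ * (z ^ p / (((j + 1) * δ) ^ p + z ^ p)) := by positivity
      have h2 : 0 ≤ δ * (δ / M) := by positivity
      linarith
    · have hzpos : 0 < z := by nlinarith
      have hzp' := Real.rpow_pos_of_pos hzpos p
      have h1 : 1 - z ^ p / (((j + 1) * δ) ^ p + z ^ p) ≤ δ / M := by
        calc _ = ((j + 1) * δ) ^ p / (((j + 1) * δ) ^ p + z ^ p) := by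
              field_simp; ring
          _ ≤ ((j + 1) * δ) ^ p / z ^ p := by
              apply div_le_div_of_nonneg_left hsp.le hzp'; linarith
          _ = (((j + 1) * δ) / z) ^ p := (Real.div_rpow hs.le hz p).symm
          _ ≤ q ^ p := by
              apply Real.rpow_le_rpow (by positivity) _ hp0.le
              rw [hq, div_le_div_iff₀ hzpos (by positivity)]
              nlinarith
          _ ≤ _ := hp
      have h2 : min z (((j : ℝ) + 1) * δ + 2 * δ) - min z ((j : ℝ) * δ + 2 * δ) ≤ δ := by
        rw [min_eq_right h.le]
        have := min_le_right z (((j : ℝ) + 1) * δ + 2 * δ)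
        linarith
      nlinarith
  have U := Finset.sum_le_sum up
  have Lw := Finset.sum_le_sum lo
  rw [Finset.sum_add_distrib, hsum,
    Finset.sum_range_sub (fun j : ℕ => min (z + δ) ((j : ℝ) * δ))] at U
  rw [Finset.sum_sub_distrib, hsum,
    Finset.sum_range_sub (fun j : ℕ => min z ((j : ℝ) * δ + 2 * δ))] at Lw
  rw [hN] at U Lw
  have e1 : min (z + δ) 0 = 0 := min_eq_right (by linarith)
  have e2 : min z (2 * δ) ≤ 2 * δ := min_le_right _ _
  have e3 : min z (M + 2 * δ) = z := min_eq_left (by linarith)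
  have e4 := min_le_left (z + δ) M
  simp only [Nat.cast_zero, zero_mul, zero_add, e1, e3] at U Lw
  generalize hS : ∑ j ∈ Finset.range N, δ * (z ^ p / (((j + 1) * δ) ^ p + z ^ p)) = S at U Lw ⊢
  rw [abs_le]
  constructor
  · linarith
  · linarith

lemma entry_bound {d : ℕ} (U : Matrix.unitaryGroup (Fin d) ℂ) (v : Fin d → ℝ) {C : ℝ}
    (hv : ∀ k, |v k| ≤ C) (i j : Fin d) :
    ‖((U : Matrix (Fin d) (Fin d) ℂ) * Matrix.diagonal (fun k => ((v k : ℝ) : ℂ)) *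
      star (U : Matrix (Fin d) (Fin d) ℂ)) i j‖ ≤ d * C := by
  rw [Matrix.mul_apply]
  simp only [Matrix.mul_diagonal, Matrix.star_apply]
  refine (norm_sum_le _ _).trans ?_
  have : ∀ k ∈ (Finset.univ : Finset (Fin d)), ‖(U : Matrix (Fin d) (Fin d) ℂ) i k * ((v k : ℝ) : ℂ) *
      star ((U : Matrix (Fin d) (Fin d) ℂ) j k)‖ ≤ C := by
    intro k _
    have h1 := entry_norm_bound_of_unitary U.2 i k
    have h2 := entry_norm_bound_of_unitary U.2 j k
    rw [norm_mul, norm_mul, norm_star, Complex.norm_real, Real.norm_eq_abs]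
    have hC := hv k
    have h0 := abs_nonneg (v k)
    calc _ ≤ 1 * C * 1 := by gcongr; linarith
      _ = C := by ring
  refine (Finset.sum_le_sum this).trans ?_
  simp

/-- abstract form -/
lemma main_aux {d : ℕ} (Y : ℝ → Matrix (Fin d) (Fin d) ℂ) (hY : IsESM Y)
    (hpos : ∀ p, (Y p).PosSemidef) :
    ∃ Z : Matrix (Fin d) (Fin d) ℂ, Tendsto (fun p : ℝ => psdPow (Y p) (1 / p)) atTop (𝓝 Z) := by
  let U : ℝ → Matrix.unitaryGroup (Fin d) ℂ := fun p => (hpos p).isHermitian.eigenvectorUnitary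
  let ev : ℝ → Fin d → ℝ := fun p => (hpos p).isHermitian.eigenvalues
  have hev : ∀ p k, 0 ≤ ev p k := fun p k => (hpos p).eigenvalues_nonneg k
  let F : ℝ → (Fin d → ℝ) → Matrix (Fin d) (Fin d) ℂ := fun p v =>
    (U p : Matrix (Fin d) (Fin d) ℂ) * Matrix.diagonal (fun k => ((v k : ℝ) : ℂ)) *
      star (U p : Matrix (Fin d) (Fin d) ℂ)
  have hFY : ∀ p, F p (ev p) = Y p := fun p => by
    conv_rhs => rw [(hpos p).isHermitian.spectral_theorem]
    rfl
  have hF1 : ∀ p c, F p (fun _ => c) = ((c : ℝ) : ℂ) • 1 := fun p c => by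
    have : Matrix.diagonal (fun _ : Fin d => ((c : ℝ) : ℂ)) = ((c : ℝ) : ℂ) • 1 := by
      rw [Matrix.smul_one_eq_diagonal]
    simp only [F, this]
    simp
  have hUU : ∀ p, star (U p : Matrix (Fin d) (Fin d) ℂ) * (U p : Matrix (Fin d) (Fin d) ℂ) = 1 :=
    fun p => Unitary.coe_star_mul_self (U p)
  have hFadd : ∀ p v w, F p v + F p w = F p (fun k => v k + w k) := fun p v w => by
    simp only [F, ← Matrix.add_mul, ← Matrix.mul_add, Matrix.diagonal_add]
    push_cast
    rfl
  have hFmul : ∀ p v w, F p v * F p w = F p (fun k => v k * w k) := fun p v w => by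
    simp only [F]
    calc _ = (U p : Matrix (Fin d) (Fin d) ℂ) * Matrix.diagonal (fun k => ((v k : ℝ) : ℂ)) *
        (star (U p : Matrix (Fin d) (Fin d) ℂ) * (U p : Matrix (Fin d) (Fin d) ℂ)) *
          Matrix.diagonal (fun k => ((w k : ℝ) : ℂ)) * star (U p : Matrix (Fin d) (Fin d) ℂ) := by
          noncomm_ring
      _ = _ := by
          rw [hUU, mul_one, mul_assoc (U p : Matrix (Fin d) (Fin d) ℂ), Matrix.diagonal_mul_diagonal]
          push_cast
          rfl
  have hFsmul : ∀ p (c : ℝ) v, (c : ℂ) • F p v = F p (fun k => c * v k) := fun p c v => by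
    have := hFmul p (fun _ => c) v
    rw [hF1] at this
    simpa using this
  have hFe : ∀ p v i j, F p v i j = ∑ k, (U p : Matrix (Fin d) (Fin d) ℂ) i k * ((v k : ℝ) : ℂ) *
      star ((U p : Matrix (Fin d) (Fin d) ℂ) j k) := by
    intro p v i j
    simp only [F]
    rw [Matrix.mul_apply]
    simp only [Matrix.mul_diagonal, Matrix.star_apply]
  -- resolvents converge
  have hconv : ∀ s : ℝ, 0 < s → ∀ i j, ∃ z, Tendsto
      (fun p => F p (fun k => ev p k / (s ^ p + ev p k)) i j) atTop (𝓝 z) := by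
    intro s hs i j
    have hW : IsESM (fun p => ((s ^ p : ℝ) : ℂ) • (1 : Matrix (Fin d) (Fin d) ℂ) + Y p) := by
      refine IsESM.add (fun a b => ?_) hY
      simp only [Matrix.smul_apply, smul_eq_mul]
      refine IsES.mul ?_ (isES_const _)
      simpa using isES_rpow hs.le (one_pos)
    have hdetne : ∀ p, (((s ^ p : ℝ) : ℂ) • (1 : Matrix (Fin d) (Fin d) ℂ) + Y p) *
        F p (fun k => 1 / (s ^ p + ev p k)) = 1 := by
      intro p
      have hsp := Real.rpow_pos_of_pos hs p
      have h1 : ((1 : ℝ) : ℂ) • (1 : Matrix (Fin d) (Fin d) ℂ) = 1 := by simp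
      rw [← hF1 p, ← hFY p, hFadd, hFmul, ← h1, ← hF1 p]
      congr 1
      ext k
      have := hev p k
      field_simp
    have hdet : ∀ p, (((s ^ p : ℝ) : ℂ) • (1 : Matrix (Fin d) (Fin d) ℂ) + Y p).det ≠ 0 := by
      intro p h0
      have := congrArg Matrix.det (hdetne p)
      rw [Matrix.det_mul, h0] at this
      simp at this
    have heq : ∀ p, F p (fun k => ev p k / (s ^ p + ev p k)) i j =
        ((((s ^ p : ℝ) : ℂ) • (1 : Matrix (Fin d) (Fin d) ℂ) + Y p).adjugate * Y p) i j /
        (((s ^ p : ℝ) : ℂ) • (1 : Matrix (Fin d) (Fin d) ℂ) + Y p).det := by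
      intro p
      set W := ((s ^ p : ℝ) : ℂ) • (1 : Matrix (Fin d) (Fin d) ℂ) + Y p with hWd
      rw [eq_div_iff (hdet p)]
      have h1 : W.adjugate = W.det • F p (fun k => 1 / (s ^ p + ev p k)) := by
        calc W.adjugate = W.adjugate * (W * F p (fun k => 1 / (s ^ p + ev p k))) := by
              rw [hdetne, mul_one]
          _ = _ := by rw [← mul_assoc, Matrix.adjugate_mul, Matrix.smul_mul, one_mul]
      have h2 : F p (fun k => 1 / (s ^ p + ev p k)) * Y p =
          F p (fun k => ev p k / (s ^ p + ev p k)) := by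
        conv_lhs => rw [← hFY p]
        rw [hFmul]
        congr 1
        ext k
        ring
      rw [h1, Matrix.smul_mul, h2, Matrix.smul_apply, smul_eq_mul, mul_comm]
    simp only [heq]
    refine ratio_tendsto ((hW.adjugate.mul hY) i j) hW.det (fun p _ => hdet p) (C := d * 1) ?_
    intro p _
    rw [← heq]
    apply entry_bound
    intro k
    have h1 := hev p k
    have hsp := Real.rpow_pos_of_pos hs p
    rw [abs_of_nonneg (by positivity), div_le_one (by positivity)]
    linarith
  -- uniform bound
  obtain ⟨M, hM0, hM⟩ : ∃ M : ℝ, 0 < M ∧ ∀ᶠ p in atTop, ∀ k, ev p k ^ (1 / p) ≤ M := by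
    have htr : IsES (fun p => (Y p).trace) := isES_sum _ fun i _ => hY i i
    obtain ⟨C, l, hC, hb⟩ := htr.bound
    refine ⟨C * Real.exp l, by positivity, ?_⟩
    filter_upwards [hb, eventually_ge_atTop 1] with p hp hp1 k
    have h1 : ev p k ≤ C * Real.exp (l * p) := by
      refine le_trans ?_ hp
      rw [(hpos p).isHermitian.trace_eq_sum_eigenvalues]
      have h2 : ev p k ≤ ∑ k, ev p k :=
        Finset.single_le_sum (fun k _ => hev p k) (Finset.mem_univ k)
      refine h2.trans ?_
      have h3 : (∑ k, (((hpos p).isHermitian.eigenvalues k : ℝ) : ℂ)) =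
          ((∑ k, ev p k : ℝ) : ℂ) := by
        push_cast
        rfl
      exact (le_abs_self _).trans (((congrArg norm h3).trans (Complex.norm_real _)).ge)
    have hp0 : 0 < p := by linarith
    calc ev p k ^ (1 / p) ≤ (C * Real.exp (l * p)) ^ (1 / p) :=
          Real.rpow_le_rpow (hev p k) h1 (by positivity)
      _ = C ^ (1 / p) * Real.exp l := by
          rw [Real.mul_rpow (by linarith) (Real.exp_pos _).le, ← Real.exp_mul]
          congr 2
          field_simp
      _ ≤ C * Real.exp l := by
          gcongr
          calc C ^ (1 / p) ≤ C ^ (1 : ℝ) := by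
                apply Real.rpow_le_rpow_of_exponent_le hC
                rw [div_le_one hp0]; exact hp1
            _ = C := Real.rpow_one C
  have hZ : ∀ p, psdPow (Y p) (1 / p) = F p (fun k => ev p k ^ (1 / p)) := fun p => by
    rw [psdPow, dif_pos (hpos p).isHermitian]
  have entry : ∀ i j, ∃ z, Tendsto (fun p => psdPow (Y p) (1 / p) i j) atTop (𝓝 z) := by
    intro i j
    apply cauchySeq_tendsto_of_complete
    rw [Metric.cauchySeq_iff']
    intro ε hε
    obtain ⟨N, hN⟩ := exists_nat_gt (max 1 (d * (3 * M) * 4 / ε))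
    have hN1 : (1 : ℝ) < N := (le_max_left _ _).trans_lt hN
    have hN2 : d * (3 * M) * 4 / ε < N := (le_max_right _ _).trans_lt hN
    have hN0 : (0 : ℝ) < N := by linarith
    set δ := M / N with hδd
    have hδ : 0 < δ := by positivity
    have hNδ : N * δ = M := by rw [hδd]; field_simp
    have hsmall : d * (3 * δ) < ε / 4 := by
      rw [div_lt_iff₀ hε] at hN2
      have : d * (3 * δ) = d * (3 * M) / N := by rw [hδd]; ring
      rw [this, div_lt_iff₀ hN0]
      linarith
    let g : ℝ → ℂ := fun p => ∑ n ∈ Finset.range N,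
      (δ : ℂ) * F p (fun k => ev p k / (((n + 1) * δ) ^ p + ev p k)) i j
    obtain ⟨z, hz⟩ : ∃ z, Tendsto g atTop (𝓝 z) := by
      have := fun n : ℕ => hconv ((n + 1) * δ) (by positivity) i j
      choose z hz using this
      exact ⟨_, tendsto_finsetSum _ fun n _ => (hz n).const_mul _⟩
    have hclose : ∀ᶠ p in atTop, ‖psdPow (Y p) (1 / p) i j - g p‖ < ε / 4 := by
      filter_upwards [scalar_approx hM0 hδ hNδ, hM, eventually_gt_atTop 0] with p h1 h2 hp0
      have : psdPow (Y p) (1 / p) i j - g p = F p (fun k => ev p k ^ (1 / p) -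
          ∑ n ∈ Finset.range N, δ * (ev p k / (((n + 1) * δ) ^ p + ev p k))) i j := by
        rw [hZ]
        simp only [g, hFe, Finset.mul_sum]
        rw [Finset.sum_comm, ← Finset.sum_sub_distrib]
        refine Finset.sum_congr rfl fun k _ => ?_
        push_cast
        rw [mul_sub, sub_mul, Finset.mul_sum, Finset.sum_mul]
        congr 1
        refine Finset.sum_congr rfl fun n _ => ?_
        ring
      rw [this]
      refine lt_of_le_of_lt (entry_bound (U p) _ (C := 3 * δ) ?_ i j) hsmall
      intro k
      have h3 := h1 (ev p k ^ (1 / p)) (Real.rpow_nonneg (hev p k) _) (h2 k)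
      have h4 : (ev p k ^ (1 / p)) ^ p = ev p k := by
        rw [← Real.rpow_mul (hev p k), one_div_mul_cancel hp0.ne', Real.rpow_one]
      rwa [h4] at h3
    have hg : ∀ᶠ p in atTop, dist (g p) z < ε / 4 :=
      hz.eventually (Metric.ball_mem_nhds _ (by positivity))
    obtain ⟨P, hP⟩ := eventually_atTop.1 (hclose.and hg)
    refine ⟨P, fun p hp => ?_⟩
    have a1 := (hP p hp).1
    have a2 := (hP p hp).2
    have b1 := (hP P le_rfl).1
    have b2 := (hP P le_rfl).2
    rw [← dist_eq_norm] at a1 b1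
    have t1 := dist_triangle (psdPow (Y p) (1 / p) i j) (g p) z
    have t2 := dist_triangle (psdPow (Y P) (1 / P) i j) (g P) z
    have t3 := dist_triangle_right (psdPow (Y p) (1 / p) i j) (psdPow (Y P) (1 / P) i j) z
    linarith
  choose z hz using entry
  exact ⟨Matrix.of z, tendsto_pi_nhds.2 fun i => tendsto_pi_nhds.2 fun j => hz i j⟩

/-- For `n + 1` positive semidefinite matrices, the matrix
`Z_p = (A_0^{p/2} ⋯ A_{n-1}^{p/2} A_n^p A_{n-1}^{p/2} ⋯ A_0^{p/2})^{1/p}` converges as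
`p → ∞`. -/
theorem anti_lie_trotter_multi_limit_exists
    {d n : ℕ} (A : Fin (n + 1) → Matrix (Fin d) (Fin d) ℂ)
    (hA : ∀ l, (A l).PosSemidef) :
    ∃ Z : Matrix (Fin d) (Fin d) ℂ,
      Tendsto (fun p : ℝ => ZmatM A p) atTop (𝓝 Z) := by
  unfold ZmatM
  have hrev : ∀ p : ℝ,
      ((List.ofFn fun l : Fin n => psdPow (A l.castSucc) (p / 2)).reverse).prod =
      ((List.ofFn fun l : Fin n => psdPow (A l.castSucc) (p / 2)).prod)ᴴ := by
    intro p
    rw [Matrix.conjTranspose_list_prod]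
    congr 2
    rw [List.map_ofFn]
    congr 1
    ext1 l
    exact (psdPow_isHermitian _ _).eq.symm
  have hl : IsESM (fun p => (List.ofFn fun l : Fin n => psdPow (A l.castSucc) (p / 2)).prod) := by
    have := isESM_list_prod (List.finRange n) (fun l p => psdPow (A l.castSucc) (p * (1 / 2)))
      (fun l => isESM_psdPow (hA _) (by norm_num))
    simpa only [List.ofFn_eq_map, mul_one_div] using this
  have hr : IsESM (fun p =>
      ((List.ofFn fun l : Fin n => psdPow (A l.castSucc) (p / 2)).reverse).prod) := by
    have := isESM_list_prod (List.finRange n).reverse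
      (fun l p => psdPow (A l.castSucc) (p * (1 / 2)))
      (fun l => isESM_psdPow (hA _) (by norm_num))
    simpa only [List.ofFn_eq_map, mul_one_div, List.map_reverse] using this
  have hm : IsESM (fun p => psdPow (A (Fin.last n)) p) := by
    simpa using isESM_psdPow (hA (Fin.last n)) one_pos
  refine main_aux _ ((hl.mul hm).mul hr) fun p => ?_
  rw [hrev]
  exact (psdPow_posSemidef (hA _) p).mul_mul_conjTranspose_same _
end

section
/- For p > 0 let G_p := (A^p # B^p)^{2/p} and let λ_1(G_p) ≥ … ≥ λ_d(G_p) be its eigenvalues in decreasing order with multiplicities. Then for every i = 1,…,d the limit λ̂_i := lim_{p→∞} λ_i(G_p) exists, a_1 b_1 ≥ λ̂_1 ≥ ⋯ ≥ λ̂_d ≥ a_d b_d, and the log-majorizations (a_i b_{d+1-i})_{i=1}^d ≺_(log) (λ̂_i)_{i=1}^d ≺_(log) (a_i b_i)_{i=1}^d hold. -/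
open Matrix Filter Topology Finset
open scoped ComplexOrder

/-- The geometric mean `X # Y = X^{1/2} (X^{-1/2} Y X^{-1/2})^{1/2} X^{1/2}`,
as used for positive definite `X` (negative functional-calculus powers are taken in the
generalized-inverse sense). -/
noncomputable def geoMeanPD {d : ℕ} (X Y : Matrix (Fin d) (Fin d) ℂ) :
    Matrix (Fin d) (Fin d) ℂ :=
  psdPow X (1 / 2) *
    psdPow (psdPow X (-(1 / 2)) * Y * psdPow X (-(1 / 2))) (1 / 2) *
    psdPow X (1 / 2)

/-- The geometric mean of two positive semidefinite matrices:
`X # Y := lim_{ε↓0} (X + εI) # (Y + εI)`. -/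
noncomputable def geoMean {d : ℕ} (X Y : Matrix (Fin d) (Fin d) ℂ) :
    Matrix (Fin d) (Fin d) ℂ :=
  limUnder (nhdsWithin (0 : ℝ) (Set.Ioi 0))
    (fun ε : ℝ => geoMeanPD (X + (ε : ℂ) • 1) (Y + (ε : ℂ) • 1))

/-- `Gmat A B p = (A^p # B^p)^{2/p}`. -/
noncomputable def Gmat {d : ℕ} (A B : Matrix (Fin d) (Fin d) ℂ) (p : ℝ) :
    Matrix (Fin d) (Fin d) ℂ :=
  psdPow (geoMean (psdPow A p) (psdPow B p)) (2 / p)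

/-- The decreasing rearrangement of a tuple of reals. -/
noncomputable def sortDesc {d : ℕ} (x : Fin d → ℝ) : Fin d → ℝ :=
  fun i => x (Tuple.sort x i.rev)

/-- Log-majorization `x ≺_(log) y` of tuples of nonnegative reals: each partial product
of the `k` largest entries of `x` is at most the corresponding one for `y`, with equality
for the full products. -/
def IsLogMaj {d : ℕ} (x y : Fin d → ℝ) : Prop :=
  (∀ k : Fin d, ∏ i ∈ Finset.Iic k, sortDesc x i ≤ ∏ i ∈ Finset.Iic k, sortDesc y i) ∧
    ∏ i, x i = ∏ i, y i

section AbstractMean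

variable {𝒜 : Type*} [CStarAlgebra 𝒜] [PartialOrder 𝒜] [StarOrderedRing 𝒜]

/-- abstract geometric mean -/
noncomputable def gm (x y : 𝒜) : 𝒜 :=
  x ^ (1 / 2 : ℝ) * (x ^ (-(1 / 2) : ℝ) * y * x ^ (-(1 / 2) : ℝ)) ^ (1 / 2 : ℝ) * x ^ (1 / 2 : ℝ)

lemma rp_half_mul {x : 𝒜} (hx : 0 ≤ x) : x ^ (1 / 2 : ℝ) * x ^ (1 / 2 : ℝ) = x := by
  have h := CFC.rpow_rpow_of_exponent_nonneg x (1/2) 2 (by norm_num) (by norm_num) hx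
  have h2 := CFC.rpow_natCast (x ^ (1/2 : ℝ)) 2 CFC.rpow_nonneg
  push_cast at h2
  rw [h2] at h
  rw [← pow_two, h]
  norm_num
  exact CFC.rpow_one x hx

lemma rp_sq {x : 𝒜} (hx : 0 ≤ x) : (x * x) ^ (1 / 2 : ℝ) = x := by
  have h := CFC.rpow_rpow_of_exponent_nonneg x 2 (1/2) (by norm_num) (by norm_num) hx
  have h2 := CFC.rpow_natCast x 2 hx
  push_cast at h2
  rw [h2, pow_two] at h
  rw [h]
  norm_num
  exact CFC.rpow_one x hx

lemma rp_half_neg {x : 𝒜} (hx : IsStrictlyPositive x) :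
    x ^ (1 / 2 : ℝ) * x ^ (-(1 / 2) : ℝ) = 1 := CFC.rpow_mul_rpow_neg _ hx

lemma rp_neg_half {x : 𝒜} (hx : IsStrictlyPositive x) :
    x ^ (-(1 / 2) : ℝ) * x ^ (1 / 2 : ℝ) = 1 := CFC.rpow_neg_mul_rpow _ hx

lemma rp_neg_one_mul {x : 𝒜} (hx : IsStrictlyPositive x) : x ^ (-1 : ℝ) * x = 1 := by
  have := CFC.rpow_neg_mul_rpow 1 hx
  rwa [CFC.rpow_one x hx.nonneg] at this

lemma rp_mul_neg_one {x : 𝒜} (hx : IsStrictlyPositive x) : x * x ^ (-1 : ℝ) = 1 := by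
  have := CFC.rpow_mul_rpow_neg 1 hx
  rwa [CFC.rpow_one x hx.nonneg] at this

lemma rp_neg_half_sq {x : 𝒜} (hx : IsStrictlyPositive x) :
    x ^ (-(1 / 2) : ℝ) * x ^ (-(1 / 2) : ℝ) = x ^ (-1 : ℝ) := by
  rw [← CFC.rpow_add hx.isUnit]; norm_num

lemma sp_conj {x c : 𝒜} (hx : IsStrictlyPositive x) (hc : IsStrictlyPositive c) :
    IsStrictlyPositive (c * x * c) :=
  hx.conjugate_of_isUnit_of_isSelfAdjoint x c hc.isUnit hc.isSelfAdjoint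

lemma gm_core_pos {x y : 𝒜} (hx : IsStrictlyPositive x) (hy : IsStrictlyPositive y) :
    IsStrictlyPositive (x ^ (-(1 / 2) : ℝ) * y * x ^ (-(1 / 2) : ℝ)) :=
  sp_conj hy (IsStrictlyPositive.rpow x _ hx)

lemma gm_pos {x y : 𝒜} (hx : IsStrictlyPositive x) (hy : IsStrictlyPositive y) :
    IsStrictlyPositive (gm x y) :=
  sp_conj (IsStrictlyPositive.rpow _ _ (gm_core_pos hx hy)) (IsStrictlyPositive.rpow x _ hx)

lemma gm_unique {x y g xi : 𝒜} (hx : IsStrictlyPositive x) (hg : 0 ≤ g)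
    (hxi : xi * x = 1) (h : g * xi * g = y) : gm x y = g := by
  have e : xi = x ^ (-1 : ℝ) := left_inv_eq_right_inv hxi (rp_mul_neg_one hx)
  subst h
  set u := x ^ (1 / 2 : ℝ) with hu
  set v := x ^ (-(1 / 2) : ℝ) with hv
  have hv0 : 0 ≤ v := CFC.rpow_nonneg
  have huv : u * v = 1 := rp_half_neg hx
  have hvu : v * u = 1 := rp_neg_half hx
  have hvv : v * v = xi := by rw [e]; exact rp_neg_half_sq hx
  have e2 : v * (g * xi * g) * v = (v * g * v) * (v * g * v) := by
    rw [← hvv]; simp only [mul_assoc]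
  have h0 : 0 ≤ v * g * v := by
    simpa using conjugate_le_conjugate_of_nonneg hg hv0
  rw [gm, ← hu, ← hv, e2, rp_sq h0]
  calc u * (v * g * v) * u = (u * v) * g * (v * u) := by simp only [mul_assoc]
    _ = g := by simp [huv, hvu]

lemma gm_eq {x y : 𝒜} (hx : IsStrictlyPositive x) (hy : IsStrictlyPositive y) :
    gm x y * x ^ (-1 : ℝ) * gm x y = y := by
  rw [gm, ← rp_neg_half_sq hx]
  have hc := gm_core_pos hx hy
  have hs := rp_half_mul hc.nonneg
  have huv := rp_half_neg hx
  have hvu := rp_neg_half hx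
  set u := x ^ (1 / 2 : ℝ) with hu
  set v := x ^ (-(1 / 2) : ℝ) with hv
  set c := v * y * v with hcdef
  set s := c ^ (1 / 2 : ℝ)
  calc u * s * u * (v * v) * (u * s * u) = u * s * (u * v) * (v * u) * s * u := by
        simp only [mul_assoc]
    _ = u * (s * s) * u := by simp [huv, hvu, mul_assoc]
    _ = (u * v) * y * (v * u) := by rw [hs, hcdef]; simp only [mul_assoc]
    _ = y := by simp [huv, hvu]

lemma gm_symm {x y : 𝒜} (hx : IsStrictlyPositive x) (hy : IsStrictlyPositive y) :
    gm x y = gm y x := by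
  have hg := gm_pos hx hy
  have h := gm_eq hx hy
  symm
  set g := gm x y with hgdef
  have h1 := rp_neg_one_mul hg
  have h2 := rp_mul_neg_one hg
  set gi := g ^ (-1 : ℝ)
  refine gm_unique (xi := gi * x * gi) hy hg.nonneg ?_ ?_
  · rw [← h]
    calc gi * x * gi * (g * x ^ (-1 : ℝ) * g) = gi * x * (gi * g) * x ^ (-1 : ℝ) * g := by
          simp only [mul_assoc]
      _ = gi * (x * x ^ (-1 : ℝ)) * g := by rw [h1]; simp [mul_assoc]
      _ = 1 := by rw [rp_mul_neg_one hx]; simp [h1]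
  · calc g * (gi * x * gi) * g = (g * gi) * x * (gi * g) := by simp only [mul_assoc]
      _ = x := by simp [h1, h2]

lemma gm_mono_right {x y y' : 𝒜} (hyy : y ≤ y') : gm x y ≤ gm x y' := by
  unfold gm
  refine conjugate_le_conjugate_of_nonneg ?_ CFC.rpow_nonneg
  refine CFC.rpow_le_rpow (by norm_num) ?_
  exact conjugate_le_conjugate_of_nonneg hyy CFC.rpow_nonneg

lemma gm_mono {x x' y y' : 𝒜} (hx : IsStrictlyPositive x) (hy : IsStrictlyPositive y)
    (hxx : x ≤ x') (hyy : y ≤ y') : gm x y ≤ gm x' y' := by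
  have hy' := hy.of_le hyy
  have hx' := hx.of_le hxx
  calc gm x y ≤ gm x y' := gm_mono_right hyy
    _ = gm y' x := gm_symm hx hy'
    _ ≤ gm y' x' := gm_mono_right hxx
    _ = gm x' y' := gm_symm hy' hx'

lemma rp_smul {x : 𝒜} (hx : IsStrictlyPositive x) {c : ℝ} (hc : 0 < c) (r : ℝ) :
    (c • x) ^ r = c ^ r • x ^ r := by
  have h1 : c • x = cfc (fun t : ℝ => c * t) x := by
    rw [cfc_const_mul_id c x]
  have hpos : ∀ t ∈ spectrum ℝ x, 0 < t := fun t ht => hx.spectrum_pos ht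
  rw [h1, CFC.cfc_rpow (fun t ht => mul_pos hc (hpos t ht)),
    CFC.rpow_eq_cfc_real hx.nonneg, ← cfc_const_mul (c ^ r) (fun t : ℝ => t ^ r) x
      (ContinuousOn.rpow_const continuousOn_id fun t ht => Or.inl (hpos t ht).ne')]
  exact cfc_congr fun t ht => Real.mul_rpow hc.le (hpos t ht).le

lemma gm_smul {x y : 𝒜} (hx : IsStrictlyPositive x) (hy : IsStrictlyPositive y) {c : ℝ}
    (hc : 0 < c) : gm (c • x) (c • y) = c • gm x y := by
  refine gm_unique (xi := c⁻¹ • x ^ (-1 : ℝ)) (hx.smul hc) (smul_nonneg hc.le (gm_pos hx hy).nonneg)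
    ?_ ?_
  · simp [smul_smul, hc.ne', rp_neg_one_mul hx]
  · conv_rhs => rw [← gm_eq hx hy]
    simp [smul_smul, hc.ne', mul_assoc]

lemma rp_conj_unitary {a w : 𝒜} (ha : IsStrictlyPositive a) (hw : w ∈ unitary 𝒜) (r : ℝ) :
    (w * a * star w) ^ r = w * a ^ r * star w := by
  have hpos : ∀ t ∈ spectrum ℝ a, 0 < t := fun t ht => ha.spectrum_pos ht
  have h0 : 0 ≤ w * a * star w := star_right_conjugate_nonneg ha.nonneg w
  rw [CFC.rpow_eq_cfc_real h0, CFC.rpow_eq_cfc_real ha.nonneg]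
  have := StarAlgHomClass.map_cfc (S := ℂ) (Unitary.conjStarAlgAut ℂ 𝒜 ⟨w, hw⟩) (fun x : ℝ => x ^ r) a
    (ContinuousOn.rpow_const continuousOn_id fun t ht => Or.inl (hpos t ht).ne')
    (by change Continuous fun z => w * z * star w; fun_prop) ha.isSelfAdjoint (by simpa using h0.isSelfAdjoint)
  simpa using this.symm

lemma rp_TTstar {u s : 𝒜} (hu : IsStrictlyPositive u) (hs : IsStrictlyPositive s) (r : ℝ) :
    (u * s * (s * u)) ^ r = (u * s) * (s * (u * u) * s) ^ (r - 1) * (s * u) := by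
  have huu : IsStrictlyPositive (u * u) := by
    simpa using sp_conj (isStrictlyPositive_one (A := 𝒜)) hu
  have hm : IsStrictlyPositive (s * (u * u) * s) := sp_conj huu hs
  set m := s * (u * u) * s with hmdef
  have hq : 0 ≤ m ^ (-(1 / 2) : ℝ) := CFC.rpow_nonneg
  have hqs : star (m ^ (-(1 / 2) : ℝ)) = m ^ (-(1 / 2) : ℝ) := hq.isSelfAdjoint
  have hstar : star (u * s * m ^ (-(1 / 2) : ℝ)) = m ^ (-(1 / 2) : ℝ) * (s * u) := by
    rw [star_mul, star_mul, hqs, hs.isSelfAdjoint.star_eq, hu.isSelfAdjoint.star_eq]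
  have hmm : m ^ (-(1 / 2) : ℝ) * m * m ^ (-(1 / 2) : ℝ) = 1 := by
    conv_lhs => enter [1, 2]; rw [← CFC.rpow_one m hm.nonneg]
    rw [← CFC.rpow_add hm.isUnit, ← CFC.rpow_add hm.isUnit]
    norm_num
    exact CFC.rpow_zero m hm.nonneg
  have h1 : star (u * s * m ^ (-(1 / 2) : ℝ)) * (u * s * m ^ (-(1 / 2) : ℝ)) = 1 := by
    rw [hstar, ← hmm, hmdef]; simp only [mul_assoc]
  have hunit : IsUnit (u * s * m ^ (-(1 / 2) : ℝ)) :=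
    (hu.isUnit.mul hs.isUnit).mul (IsStrictlyPositive.rpow m _ hm).isUnit
  have h2 : (u * s * m ^ (-(1 / 2) : ℝ)) * star (u * s * m ^ (-(1 / 2) : ℝ)) = 1 := by
    obtain ⟨w, hw⟩ := hunit
    rw [← hw] at h1 ⊢
    rw [left_inv_eq_right_inv h1 (show (w : 𝒜) * ↑w⁻¹ = 1 by simp)]; simp
  have hW : (u * s * m ^ (-(1 / 2) : ℝ)) ∈ unitary 𝒜 := ⟨h1, h2⟩
  have key := rp_conj_unitary hm hW r
  rw [hstar] at key
  have e1 : u * s * m ^ (-(1 / 2) : ℝ) * m * (m ^ (-(1 / 2) : ℝ) * (s * u)) = u * s * (s * u) := by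
    calc _ = u * s * (m ^ (-(1 / 2) : ℝ) * m * m ^ (-(1 / 2) : ℝ)) * (s * u) := by
          simp only [mul_assoc]
      _ = _ := by rw [hmm, mul_one]
  have e2 : m ^ (r - 1) = m ^ (-(1 / 2) : ℝ) * m ^ r * m ^ (-(1 / 2) : ℝ) := by
    rw [← CFC.rpow_add hm.isUnit, ← CFC.rpow_add hm.isUnit]; congr 1; ring
  rw [e1] at key
  rw [key, e2]; simp only [mul_assoc]

lemma ando_hiai_one {x y : 𝒜} (hx : IsStrictlyPositive x) (hy : IsStrictlyPositive y)
    (h : gm x y ≤ 1) {r : ℝ} (hr1 : 1 ≤ r) (hr2 : r ≤ 2) : gm (x ^ r) (y ^ r) ≤ 1 := by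
  have hc := gm_core_pos hx hy
  have hs2 := rp_half_mul hc.nonneg
  have huv := rp_half_neg hx
  have hvu := rp_neg_half hx
  have huu := rp_half_mul hx.nonneg
  have hvv := rp_neg_half_sq hx
  have hu0 := IsStrictlyPositive.rpow x (1 / 2) hx
  have hv0 := IsStrictlyPositive.rpow x (-(1 / 2)) hx
  have hg : gm x y = x ^ (1 / 2 : ℝ) *
    (x ^ (-(1 / 2) : ℝ) * y * x ^ (-(1 / 2) : ℝ)) ^ (1 / 2 : ℝ) * x ^ (1 / 2 : ℝ) := rfl
  have hs0 := IsStrictlyPositive.rpow _ (1 / 2) hc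
  have hg0 := gm_pos hx hy
  set g := gm x y
  set u := x ^ (1 / 2 : ℝ) with hu
  set v := x ^ (-(1 / 2) : ℝ) with hv
  set c := v * y * v with hcdef
  set s := c ^ (1 / 2 : ℝ) with hsdef
  have hcy : y = u * s * (s * u) := by
    calc y = (u * v) * y * (v * u) := by simp [huv, hvu]
      _ = u * c * u := by rw [hcdef]; simp only [mul_assoc]
      _ = _ := by rw [← hs2]; simp only [mul_assoc]
  have hsx : s ≤ x ^ (-1 : ℝ) := by
    have := conjugate_le_conjugate_of_nonneg h hv0.nonneg
    rw [mul_one, hvv, hg] at this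
    calc s = (v * u) * s * (u * v) := by simp [huv, hvu]
      _ = v * (u * s * u) * v := by simp only [mul_assoc]
      _ ≤ _ := this
  have hx1 := IsStrictlyPositive.rpow x (-1) hx
  -- x ≤ s⁻¹
  have hxs : x ≤ s ^ (-1 : ℝ) := by
    have := CStarAlgebra.ringInverse_le_ringInverse hsx hs0
    rw [CFC.inverse_eq_rpow_neg_one hx1, CFC.inverse_eq_rpow_neg_one hs0,
      CFC.rpow_rpow x _ _ (by norm_num) hx] at this
    norm_num at this
    rwa [CFC.rpow_one x hx.nonneg] at this
  have hI : r - 1 ∈ Set.Icc (0 : ℝ) 1 := ⟨by linarith, by linarith⟩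
  have hX : x ^ r ≤ u * (s ^ (-1 : ℝ)) ^ (r - 1) * u := by
    have h1 := conjugate_le_conjugate_of_nonneg (CFC.rpow_le_rpow hI hxs) hu0.nonneg
    have h2 : u * x ^ (r - 1) * u = x ^ r := by
      rw [hu, ← CFC.rpow_add hx.isUnit, ← CFC.rpow_add hx.isUnit]; congr 1; ring
    rwa [h2] at h1
  have hY : y ^ r ≤ u * s * s ^ (r - 1) * (s * u) := by
    rw [hcy, rp_TTstar hu0 hs0, huu]
    have h1 : s * x * s ≤ s := by
      have := conjugate_le_conjugate_of_nonneg hxs hs0.nonneg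
      rwa [rp_mul_neg_one hs0, one_mul] at this
    have h2 := conjugate_le_conjugate_of_nonneg (CFC.rpow_le_rpow hI h1) hs0.nonneg
    have h3 := conjugate_le_conjugate_of_nonneg h2 hu0.nonneg
    simpa only [mul_assoc] using h3
  have hsi := IsStrictlyPositive.rpow s (-1) hs0
  have hX' : IsStrictlyPositive (u * (s ^ (-1 : ℝ)) ^ (r - 1) * u) :=
    sp_conj (IsStrictlyPositive.rpow _ _ hsi) hu0
  have hrr : (s ^ (-1 : ℝ)) ^ (r - 1) = s ^ (-(r - 1)) := by
    rw [CFC.rpow_rpow s _ _ (by norm_num) hs0]; congr 1; ring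
  have hfin : gm (u * (s ^ (-1 : ℝ)) ^ (r - 1) * u) (u * s * s ^ (r - 1) * (s * u)) = g := by
    refine gm_unique (xi := v * s ^ (r - 1) * v) hX' hg0.nonneg ?_ ?_
    · rw [hrr]
      calc v * s ^ (r - 1) * v * (u * s ^ (-(r - 1)) * u)
          = v * s ^ (r - 1) * (v * u) * s ^ (-(r - 1)) * u := by simp only [mul_assoc]
        _ = v * (s ^ (r - 1) * s ^ (-(r - 1))) * u := by rw [hvu]; simp [mul_assoc]
        _ = 1 := by rw [CFC.rpow_mul_rpow_neg _ hs0, mul_one, hvu]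
    · rw [hg]
      calc u * s * u * (v * s ^ (r - 1) * v) * (u * s * u)
          = u * s * (u * v) * s ^ (r - 1) * (v * u) * s * u := by simp only [mul_assoc]
        _ = _ := by rw [huv, hvu]; simp [mul_assoc]
  calc gm (x ^ r) (y ^ r) ≤ _ := gm_mono (IsStrictlyPositive.rpow x r hx)
        (IsStrictlyPositive.rpow y r hy) hX hY
    _ = g := hfin
    _ ≤ 1 := h

lemma ando_hiai {x y : 𝒜} (hx : IsStrictlyPositive x) (hy : IsStrictlyPositive y) {c : ℝ}
    (hc : 0 < c) (h : gm x y ≤ c • (1 : 𝒜)) {r : ℝ} (hr1 : 1 ≤ r) (hr2 : r ≤ 2) :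
    gm (x ^ r) (y ^ r) ≤ c ^ r • (1 : 𝒜) := by
  have hci : 0 < c⁻¹ := inv_pos.2 hc
  have h1 : gm (c⁻¹ • x) (c⁻¹ • y) ≤ 1 := by
    rw [gm_smul hx hy hci]
    calc c⁻¹ • gm x y ≤ c⁻¹ • c • (1 : 𝒜) := smul_le_smul_of_nonneg_left h hci.le
      _ = 1 := by simp [smul_smul, hc.ne']
  have h2 := ando_hiai_one (hx.smul hci) (hy.smul hci) h1 hr1 hr2
  have hcr : 0 < c⁻¹ ^ r := Real.rpow_pos_of_pos hci r
  rw [rp_smul hx hci, rp_smul hy hci, gm_smul (IsStrictlyPositive.rpow x r hx)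
        (IsStrictlyPositive.rpow y r hy) hcr] at h2
  have h3 := smul_le_smul_of_nonneg_left h2 (Real.rpow_nonneg hc.le r)
  rwa [smul_smul, Real.inv_rpow hc.le, mul_inv_cancel₀ (Real.rpow_pos_of_pos hc r).ne',
    one_smul] at h3

end AbstractMean

section MatrixBasics

open scoped MatrixOrder Matrix.Norms.L2Operator

variable {n : Type*} [Fintype n] [DecidableEq n]

/-- `V diag(e) V*` -/
noncomputable def dg (V : Matrix n n ℂ) (e : n → ℝ) : Matrix n n ℂ :=
  V * Matrix.diagonal (fun i => (e i : ℂ)) * Vᴴ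

lemma dg_herm (V : Matrix n n ℂ) (e : n → ℝ) : (dg V e).IsHermitian := by
  unfold dg
  apply Matrix.isHermitian_mul_mul_conjTranspose
  rw [Matrix.isHermitian_diagonal_iff]
  intro i
  simp [IsSelfAdjoint]

lemma uni_left {V : Matrix n n ℂ} (hV : V ∈ Matrix.unitaryGroup n ℂ) : Vᴴ * V = 1 :=
  Matrix.mem_unitaryGroup_iff'.1 hV

lemma uni_right {V : Matrix n n ℂ} (hV : V ∈ Matrix.unitaryGroup n ℂ) : V * Vᴴ = 1 :=
  Matrix.mem_unitaryGroup_iff.1 hV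

lemma dg_intertwine {V W : Matrix n n ℂ} {e e' : n → ℝ}
    (hV : V ∈ Matrix.unitaryGroup n ℂ) (hW : W ∈ Matrix.unitaryGroup n ℂ)
    (h : dg V e = dg W e') (f : ℝ → ℝ) :
    dg V (fun i => f (e i)) = dg W (fun i => f (e' i)) := by
  have h1 : Wᴴ * V * Matrix.diagonal (fun i => (e i : ℂ)) =
      Matrix.diagonal (fun i => (e' i : ℂ)) * (Wᴴ * V) := by
    have := congrArg (fun M => Wᴴ * M * V) h
    simp only [dg] at this
    calc Wᴴ * V * Matrix.diagonal (fun i => (e i : ℂ))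
        = Wᴴ * (V * Matrix.diagonal (fun i => (e i : ℂ)) * Vᴴ) * V := by
          simp only [Matrix.mul_assoc, uni_left hV, Matrix.mul_one]
      _ = _ := this
      _ = (Wᴴ * W) * (Matrix.diagonal (fun i => (e' i : ℂ)) * (Wᴴ * V)) := by
          simp only [Matrix.mul_assoc]
      _ = _ := by rw [uni_left hW, Matrix.one_mul]
  have h2 : Wᴴ * V * Matrix.diagonal (fun i => ((f (e i) : ℝ) : ℂ)) =
      Matrix.diagonal (fun i => ((f (e' i) : ℝ) : ℂ)) * (Wᴴ * V) := by
    ext i j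
    have := congrFun (congrFun h1 i) j
    rw [Matrix.mul_diagonal, Matrix.diagonal_mul] at this ⊢
    by_cases hz : (Wᴴ * V) i j = 0
    · simp [hz]
    · have h3 : e j = e' i := by
        rw [mul_comm] at this
        exact_mod_cast mul_right_cancel₀ hz this
      rw [h3, mul_comm]
  unfold dg
  calc V * Matrix.diagonal (fun i => ((f (e i) : ℝ) : ℂ)) * Vᴴ
      = (W * Wᴴ) * (V * Matrix.diagonal (fun i => ((f (e i) : ℝ) : ℂ)) * Vᴴ) := by
        rw [uni_right hW, Matrix.one_mul]
    _ = W * (Wᴴ * V * Matrix.diagonal (fun i => ((f (e i) : ℝ) : ℂ))) * Vᴴ := by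
        simp only [Matrix.mul_assoc]
    _ = W * Matrix.diagonal (fun i => ((f (e' i) : ℝ) : ℂ)) * Wᴴ * (V * Vᴴ) := by
        rw [h2]; simp only [Matrix.mul_assoc]
    _ = _ := by rw [uni_right hV, Matrix.mul_one]

lemma herm_spec {A : Matrix n n ℂ} (hA : A.IsHermitian) :
    A = dg (hA.eigenvectorUnitary : Matrix n n ℂ) hA.eigenvalues := by
  conv_lhs => rw [hA.spectral_theorem]
  rfl

lemma cfc_herm {A : Matrix n n ℂ} (hA : A.IsHermitian) (f : ℝ → ℝ) :
    cfc f A = dg (hA.eigenvectorUnitary : Matrix n n ℂ) (fun i => f (hA.eigenvalues i)) := by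
  rw [hA.cfc_eq]
  rfl

lemma cfc_dg {V : Matrix n n ℂ} (hV : V ∈ Matrix.unitaryGroup n ℂ) (e : n → ℝ) (f : ℝ → ℝ) :
    cfc f (dg V e) = dg V (fun i => f (e i)) := by
  rw [cfc_herm (dg_herm V e)]
  exact (dg_intertwine hV (Subtype.prop _) (herm_spec (dg_herm V e)) f).symm

lemma psdPow_eq_cfc {d : ℕ} {A : Matrix (Fin d) (Fin d) ℂ} (hA : A.IsHermitian) (r : ℝ) :
    psdPow A r = cfc (fun x : ℝ => x ^ r) A := by
  rw [cfc_herm hA, psdPow, dif_pos hA]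
  rfl

lemma psdPow_dg {d : ℕ} {V : Matrix (Fin d) (Fin d) ℂ} (hV : V ∈ Matrix.unitaryGroup (Fin d) ℂ)
    (e : Fin d → ℝ) (r : ℝ) : psdPow (dg V e) r = dg V (fun i => e i ^ r) := by
  rw [psdPow_eq_cfc (dg_herm V e), cfc_dg hV]

lemma psdPow_eq_rpow {d : ℕ} {A : Matrix (Fin d) (Fin d) ℂ} (hA : 0 ≤ A) (r : ℝ) :
    psdPow A r = A ^ r := by
  rw [psdPow_eq_cfc (Matrix.nonneg_iff_posSemidef.1 hA).isHermitian, CFC.rpow_eq_cfc_real hA]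

lemma geoMeanPD_eq_gm {d : ℕ} {X Y : Matrix (Fin d) (Fin d) ℂ} (hX : IsStrictlyPositive X)
    (hY : IsStrictlyPositive Y) : geoMeanPD X Y = gm X Y := by
  unfold geoMeanPD gm
  rw [psdPow_eq_rpow hX.nonneg, psdPow_eq_rpow hX.nonneg,
    psdPow_eq_rpow (gm_core_pos hX hY).nonneg]

lemma dg_quad (V : Matrix n n ℂ) (e : n → ℝ) (x : n → ℂ) :
    star x ⬝ᵥ (dg V e *ᵥ x) = ((∑ j, e j * ‖(Vᴴ *ᵥ x) j‖ ^ 2 : ℝ) : ℂ) := by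
  unfold dg
  have h1 : star x ⬝ᵥ ((V * Matrix.diagonal (fun i => (e i : ℂ)) * Vᴴ) *ᵥ x) =
      star (Vᴴ *ᵥ x) ⬝ᵥ (Matrix.diagonal (fun i => (e i : ℂ)) *ᵥ (Vᴴ *ᵥ x)) := by
    rw [Matrix.star_mulVec, Matrix.conjTranspose_conjTranspose, ← Matrix.dotProduct_mulVec,
      Matrix.mulVec_mulVec, Matrix.mulVec_mulVec, Matrix.mul_assoc]
  rw [h1]
  simp only [dotProduct, Matrix.mulVec_diagonal, Pi.star_apply]
  push_cast
  refine Finset.sum_congr rfl fun j _ => ?_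
  rw [← Complex.conj_mul']
  simp only [RCLike.star_def]
  ring

lemma dg_one {V : Matrix n n ℂ} (hV : V ∈ Matrix.unitaryGroup n ℂ) (c : ℝ) :
    dg V (fun _ => c) = c • (1 : Matrix n n ℂ) := by
  unfold dg
  have : Matrix.diagonal (fun _ : n => (c : ℂ)) = c • (1 : Matrix n n ℂ) := by
    ext i j
    by_cases h : i = j <;> simp [h, Matrix.diagonal]
  rw [this]
  simp [uni_right hV]

lemma dg_add (V : Matrix n n ℂ) (e f : n → ℝ) :
    dg V e + dg V f = dg V (fun i => e i + f i) := by
  unfold dg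
  rw [← Matrix.add_mul, ← Matrix.mul_add, Matrix.diagonal_add]
  simp

lemma norm_uni {V : Matrix n n ℂ} (hV : V ∈ Matrix.unitaryGroup n ℂ) (x : n → ℂ) :
    ∑ j, ‖(Vᴴ *ᵥ x) j‖ ^ 2 = ∑ j, ‖x j‖ ^ 2 := by
  have h1 := dg_quad V (fun _ => 1) x
  have h2 := dg_quad (1 : Matrix n n ℂ) (fun _ => 1) x
  rw [dg_one hV] at h1
  rw [dg_one (one_mem _), h1] at h2
  have := Complex.ofReal_injective h2
  simpa using this

lemma dg_nonneg (V : Matrix n n ℂ) {e : n → ℝ} (he : ∀ i, 0 ≤ e i) : 0 ≤ dg V e := by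
  rw [Matrix.nonneg_iff_posSemidef]
  refine Matrix.PosSemidef.of_dotProduct_mulVec_nonneg (dg_herm V e) fun x => ?_
  rw [dg_quad]
  exact_mod_cast Finset.sum_nonneg fun j _ => mul_nonneg (he j) (by positivity)

lemma dg_mono (V : Matrix n n ℂ) {e f : n → ℝ} (h : ∀ i, e i ≤ f i) : dg V e ≤ dg V f := by
  have h1 := dg_nonneg V (e := fun i => f i - e i) (fun i => sub_nonneg.2 (h i))
  have h2 : dg V f = dg V e + dg V (fun i => f i - e i) := by
    rw [dg_add]; congr 1; ext i; ring
  rw [h2]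
  exact le_add_of_nonneg_right h1

lemma dg_mul {V : Matrix n n ℂ} (hV : V ∈ Matrix.unitaryGroup n ℂ) (e f : n → ℝ) :
    dg V e * dg V f = dg V (fun i => e i * f i) := by
  unfold dg
  calc _ = V * (Matrix.diagonal (fun i => (e i : ℂ)) * (Vᴴ * V) *
        Matrix.diagonal (fun i => (f i : ℂ))) * Vᴴ := by simp only [Matrix.mul_assoc]
    _ = _ := by rw [uni_left hV, Matrix.mul_one, Matrix.diagonal_mul_diagonal]; simp

lemma dg_sp {V : Matrix n n ℂ} (hV : V ∈ Matrix.unitaryGroup n ℂ) {e : n → ℝ}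
    (he : ∀ i, 0 < e i) : IsStrictlyPositive (dg V e) := by
  rw [IsStrictlyPositive.iff_of_unital]
  refine ⟨dg_nonneg V fun i => (he i).le, ?_⟩
  refine IsUnit.of_mul_eq_one (dg V fun i => (e i)⁻¹) ?_
  rw [dg_mul hV]
  have : (fun i => e i * (e i)⁻¹) = fun _ => (1 : ℝ) := by
    ext i; exact mul_inv_cancel₀ (he i).ne'
  rw [this, dg_one hV, one_smul]

lemma rpow_dg {V : Matrix n n ℂ} (hV : V ∈ Matrix.unitaryGroup n ℂ) {e : n → ℝ}
    (he : ∀ i, 0 ≤ e i) (r : ℝ) : (dg V e) ^ r = dg V (fun i => e i ^ r) := by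
  rw [CFC.rpow_eq_cfc_real (dg_nonneg V he), cfc_dg hV]

lemma dg_le_nonneg {V : Matrix n n ℂ} (hV : V ∈ Matrix.unitaryGroup n ℂ) {e : n → ℝ}
    {c : ℝ} : dg V e ≤ c • 1 ↔ ∀ i, e i ≤ c := by
  constructor
  · intro h i
    have h1 := (Matrix.le_iff.1 h).dotProduct_mulVec_nonneg (V *ᵥ Pi.single i 1)
    rw [Matrix.sub_mulVec, dotProduct_sub, ← dg_one hV, dg_quad, dg_quad, sub_nonneg] at h1
    have h2 := Complex.real_le_real.1 h1
    rw [Matrix.mulVec_mulVec, uni_left hV, Matrix.one_mulVec] at h2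
    simpa [Pi.single_apply, apply_ite] using h2
  · intro h
    rw [← dg_one hV]
    exact dg_mono V h

end MatrixBasics

section Eigs

open scoped MatrixOrder Matrix.Norms.L2Operator

variable {d : ℕ}

lemma weyl_dg {V W : Matrix (Fin d) (Fin d) ℂ} {m n : Fin d → ℝ}
    (hV : V ∈ Matrix.unitaryGroup (Fin d) ℂ) (hW : W ∈ Matrix.unitaryGroup (Fin d) ℂ)
    (hm : Antitone m) (hn : Antitone n) (h : dg V m ≤ dg W n) (i : Fin d) : m i ≤ n i := by
  let K : Matrix (Fin d) (Fin d) ℂ :=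
    Matrix.of fun j => if j < i then Wᴴ j else if i < j then Vᴴ j else 0
  have hK : K.det = 0 := by
    apply Matrix.det_eq_zero_of_row_eq_zero i
    intro j
    simp [K]
  obtain ⟨x, hx0, hx⟩ := Matrix.exists_mulVec_eq_zero_iff.2 hK
  have hxW : ∀ j, j < i → (Wᴴ *ᵥ x) j = 0 := by
    intro j hj
    have := congrFun hx j
    simpa [K, Matrix.mulVec, hj] using this
  have hxV : ∀ j, i < j → (Vᴴ *ᵥ x) j = 0 := by
    intro j hj
    have := congrFun hx j
    simpa [K, Matrix.mulVec, hj, hj.le.not_gt] using this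
  have hpos : 0 < ∑ j, ‖x j‖ ^ 2 := by
    obtain ⟨j, hj⟩ := Function.ne_iff.1 hx0
    refine Finset.sum_pos' (fun _ _ => by positivity) ⟨j, Finset.mem_univ _, ?_⟩
    have : 0 < ‖x j‖ := norm_pos_iff.2 hj
    positivity
  have h1 := (Matrix.le_iff.1 h).dotProduct_mulVec_nonneg x
  rw [Matrix.sub_mulVec, dotProduct_sub, dg_quad, dg_quad, sub_nonneg] at h1
  have h2 := Complex.real_le_real.1 h1
  have h3 : m i * ∑ j, ‖x j‖ ^ 2 ≤ ∑ j, m j * ‖(Vᴴ *ᵥ x) j‖ ^ 2 := by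
    rw [← norm_uni hV, Finset.mul_sum]
    refine Finset.sum_le_sum fun j _ => ?_
    rcases le_or_gt j i with hj | hj
    · exact mul_le_mul_of_nonneg_right (hm hj) (by positivity)
    · simp [hxV j hj]
  have h4 : ∑ j, n j * ‖(Wᴴ *ᵥ x) j‖ ^ 2 ≤ n i * ∑ j, ‖x j‖ ^ 2 := by
    rw [← norm_uni hW, Finset.mul_sum]
    refine Finset.sum_le_sum fun j _ => ?_
    rcases lt_or_ge j i with hj | hj
    · simp [hxW j hj]
    · exact mul_le_mul_of_nonneg_right (hn hj) (by positivity)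
  exact le_of_mul_le_mul_right (h3.trans (h2.trans h4)) hpos

lemma dg_unique {V W : Matrix (Fin d) (Fin d) ℂ} {m n : Fin d → ℝ}
    (hV : V ∈ Matrix.unitaryGroup (Fin d) ℂ) (hW : W ∈ Matrix.unitaryGroup (Fin d) ℂ)
    (hm : Antitone m) (hn : Antitone n) (h : dg V m = dg W n) : m = n := by
  ext i
  exact le_antisymm (weyl_dg hV hW hm hn h.le i) (weyl_dg hW hV hn hm h.ge i)

lemma dg_perm {V : Matrix (Fin d) (Fin d) ℂ} (hV : V ∈ Matrix.unitaryGroup (Fin d) ℂ)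
    (e : Fin d → ℝ) (σ : Equiv.Perm (Fin d)) :
    ∃ W ∈ Matrix.unitaryGroup (Fin d) ℂ, dg V e = dg W (e ∘ σ) := by
  refine ⟨V.submatrix id σ, ?_, ?_⟩
  · rw [Matrix.mem_unitaryGroup_iff, Matrix.star_eq_conjTranspose, Matrix.conjTranspose_submatrix,
      Matrix.submatrix_mul_equiv, uni_right hV]
    simp
  · unfold dg
    have : Matrix.diagonal (fun i => (((e ∘ σ) i : ℝ) : ℂ)) =
        (Matrix.diagonal fun i => (e i : ℂ)).submatrix σ σ := by
      rw [Matrix.submatrix_diagonal_equiv]; rfl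
    rw [this, Matrix.conjTranspose_submatrix, Matrix.submatrix_mul_equiv,
      Matrix.submatrix_mul_equiv]
    simp

lemma sortDesc_antitone (x : Fin d → ℝ) : Antitone (sortDesc x) := by
  intro i j hij
  exact Tuple.monotone_sort x (Fin.rev_le_rev.2 hij)

lemma eigsDesc_antitone (M : Matrix (Fin d) (Fin d) ℂ) : Antitone (eigsDesc M) := by
  unfold eigsDesc
  split_ifs with h
  · exact sortDesc_antitone h.eigenvalues
  · exact fun _ _ _ => le_rfl

lemma eigsDesc_spec {M : Matrix (Fin d) (Fin d) ℂ} (hM : M.IsHermitian) :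
    ∃ W ∈ Matrix.unitaryGroup (Fin d) ℂ, M = dg W (eigsDesc M) := by
  obtain ⟨W, hW, h⟩ := dg_perm (Subtype.prop hM.eigenvectorUnitary) hM.eigenvalues
    (Fin.revPerm.trans (Tuple.sort hM.eigenvalues))
  refine ⟨W, hW, ?_⟩
  conv_lhs => rw [herm_spec hM, h]
  rw [eigsDesc, dif_pos hM]
  rfl

lemma eigsDesc_dg {V : Matrix (Fin d) (Fin d) ℂ} (hV : V ∈ Matrix.unitaryGroup (Fin d) ℂ)
    {e : Fin d → ℝ} (he : Antitone e) : eigsDesc (dg V e) = e := by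
  obtain ⟨W, hW, h⟩ := eigsDesc_spec (dg_herm V e)
  exact (dg_unique hV hW he (eigsDesc_antitone _) h).symm

lemma eigsDesc_mono {M N : Matrix (Fin d) (Fin d) ℂ} (hM : M.IsHermitian) (hN : N.IsHermitian)
    (h : M ≤ N) (i : Fin d) : eigsDesc M i ≤ eigsDesc N i := by
  obtain ⟨V, hV, h1⟩ := eigsDesc_spec hM
  obtain ⟨W, hW, h2⟩ := eigsDesc_spec hN
  exact weyl_dg hV hW (eigsDesc_antitone _) (eigsDesc_antitone _) (h1 ▸ h2 ▸ h) i

lemma eigsDesc_nonneg {M : Matrix (Fin d) (Fin d) ℂ} (hM : 0 ≤ M) (i : Fin d) :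
    0 ≤ eigsDesc M i := by
  have h0 : eigsDesc (0 : Matrix (Fin d) (Fin d) ℂ) = fun _ => 0 := by
    have := dg_one (one_mem (Matrix.unitaryGroup (Fin d) ℂ)) 0
    rw [zero_smul] at this
    conv_lhs => rw [← this]
    exact eigsDesc_dg (one_mem _) (fun _ _ _ => le_rfl)
  have := eigsDesc_mono Matrix.isHermitian_zero (Matrix.nonneg_iff_posSemidef.1 hM).isHermitian hM i
  rwa [h0] at this

lemma eigsDesc_add_smul {M : Matrix (Fin d) (Fin d) ℂ} (hM : M.IsHermitian) (c : ℝ) :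
    eigsDesc (M + c • 1) = fun i => eigsDesc M i + c := by
  obtain ⟨V, hV, h1⟩ := eigsDesc_spec hM
  conv_lhs => rw [h1, ← dg_one hV c, dg_add]
  exact eigsDesc_dg hV fun i j hij => by simpa using eigsDesc_antitone M hij

lemma herm_smul_one (c : ℝ) : (c • (1 : Matrix (Fin d) (Fin d) ℂ)).IsHermitian := by
  rw [← dg_one (one_mem _)]; exact dg_herm _ _

lemma eigsDesc_sub_le {M N : Matrix (Fin d) (Fin d) ℂ} (hM : M.IsHermitian) (hN : N.IsHermitian)
    (i : Fin d) : eigsDesc M i - eigsDesc N i ≤ ‖M - N‖ := by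
  have hs : IsSelfAdjoint (M - N) := hM.sub hN
  have h1 : M ≤ N + ‖M - N‖ • 1 := by
    have := hs.le_algebraMap_norm_self
    rw [Algebra.algebraMap_eq_smul_one] at this
    rwa [sub_le_iff_le_add'] at this
  have h2 := eigsDesc_mono hM (hN.add (herm_smul_one _)) h1 i
  rw [eigsDesc_add_smul hN] at h2
  linarith

lemma eigsDesc_tendsto {ι : Type*} {l : Filter ι} {F : ι → Matrix (Fin d) (Fin d) ℂ}
    {M : Matrix (Fin d) (Fin d) ℂ} (hF : ∀ᶠ t in l, (F t).IsHermitian) (hM : M.IsHermitian)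
    (h : Tendsto F l (𝓝 M)) (i : Fin d) :
    Tendsto (fun t => eigsDesc (F t) i) l (𝓝 (eigsDesc M i)) := by
  rw [tendsto_iff_norm_sub_tendsto_zero] at h ⊢
  refine squeeze_zero' (Eventually.of_forall fun _ => norm_nonneg _) ?_ h
  filter_upwards [hF] with t ht
  rw [Real.norm_eq_abs, abs_le]
  have h1 := eigsDesc_sub_le ht hM i
  have h2 := eigsDesc_sub_le hM ht i
  rw [norm_sub_rev] at h2
  constructor <;> linarith

end Eigs

section Lidskii

open scoped MatrixOrder Matrix.Norms.L2Operator

variable {d : ℕ}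

lemma sp_herm {M : Matrix (Fin d) (Fin d) ℂ} (hM : IsStrictlyPositive M) : M.IsHermitian :=
  (Matrix.nonneg_iff_posSemidef.1 hM.nonneg).isHermitian

lemma eigsDesc_pos {M : Matrix (Fin d) (Fin d) ℂ} (hM : IsStrictlyPositive M) (i : Fin d) :
    0 < eigsDesc M i := by
  have hp : M.PosDef := Matrix.isStrictlyPositive_iff_posDef.1 hM
  rw [eigsDesc, dif_pos hp.isHermitian]
  exact hp.eigenvalues_pos _

lemma dg_det {V : Matrix (Fin d) (Fin d) ℂ} (hV : V ∈ Matrix.unitaryGroup (Fin d) ℂ)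
    (e : Fin d → ℝ) : (dg V e).det = ((∏ i, e i : ℝ) : ℂ) := by
  unfold dg
  rw [Matrix.det_mul, Matrix.det_mul, mul_right_comm, ← Matrix.det_mul, uni_right hV,
    Matrix.det_diagonal]
  simp

lemma eigsDesc_det {M : Matrix (Fin d) (Fin d) ℂ} (hM : M.IsHermitian) :
    M.det = ((∏ i, eigsDesc M i : ℝ) : ℂ) := by
  obtain ⟨V, hV, h⟩ := eigsDesc_spec hM
  conv_lhs => rw [h]
  exact dg_det hV _

lemma flip_dg {T V : Matrix (Fin d) (Fin d) ℂ} (hV : V ∈ Matrix.unitaryGroup (Fin d) ℂ)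
    {e : Fin d → ℝ} (he : ∀ i, 0 < e i) (h : Tᴴ * T = dg V e) :
    ∃ W ∈ Matrix.unitaryGroup (Fin d) ℂ, T * Tᴴ = dg W e := by
  let D : Matrix (Fin d) (Fin d) ℂ := Matrix.diagonal fun i => ((1 / Real.sqrt (e i) : ℝ) : ℂ)
  have hD : Dᴴ = D := by
    simp only [D, Matrix.diagonal_conjTranspose]
    congr 1; ext i; simp
  have hD1 : D * Matrix.diagonal (fun i => (e i : ℂ)) * D = 1 := by
    simp only [D, Matrix.diagonal_mul_diagonal]
    rw [← Matrix.diagonal_one]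
    congr 1; ext i
    have h1 := Real.mul_self_sqrt (he i).le
    have h2 := (Real.sqrt_pos.2 (he i)).ne'
    norm_cast
    field_simp
    nlinarith
  have hW : T * V * D ∈ Matrix.unitaryGroup (Fin d) ℂ := by
    rw [Matrix.mem_unitaryGroup_iff', Matrix.star_eq_conjTranspose]
    simp only [Matrix.conjTranspose_mul, hD]
    calc D * (Vᴴ * Tᴴ) * (T * V * D) = D * (Vᴴ * (Tᴴ * T) * V) * D := by
          simp only [Matrix.mul_assoc]
      _ = D * ((Vᴴ * V) * Matrix.diagonal (fun i => (e i : ℂ)) * (Vᴴ * V)) * D := by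
          rw [h, dg]; simp only [Matrix.mul_assoc]
      _ = 1 := by rw [uni_left hV, Matrix.one_mul, Matrix.mul_one, hD1]
  refine ⟨_, hW, ?_⟩
  have hD2 : D * Matrix.diagonal (fun i => (e i : ℂ)) * D = 1 := hD1
  unfold dg
  simp only [Matrix.conjTranspose_mul, hD]
  calc T * Tᴴ = T * (V * 1 * Vᴴ) * Tᴴ := by rw [Matrix.mul_one, uni_right hV, Matrix.mul_one]
    _ = _ := by rw [← hD2]; simp only [Matrix.mul_assoc]

lemma lidskii {s P : Matrix (Fin d) (Fin d) ℂ} (hs : IsStrictlyPositive s)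
    (hP : IsStrictlyPositive P) (S : Finset (Fin d)) :
    ∏ i ∈ S, eigsDesc (s * P * s) i ≤
      (∏ i ∈ S, eigsDesc (s * s) i) *
        ∏ i ∈ Finset.univ.filter (fun j : Fin d => j.val < S.card), eigsDesc P i := by
  rcases Nat.eq_zero_or_pos S.card with h0 | h0
  · rw [Finset.card_eq_zero.1 h0]; simp
  have hSd : S.card ≤ d := by simpa using Finset.card_le_univ S
  set Q := Finset.univ.filter (fun j : Fin d => j.val < S.card) with hQ
  obtain ⟨V, hV, hPV⟩ := eigsDesc_spec (sp_herm hP)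
  set p := eigsDesc P with hp
  have hpa : Antitone p := eigsDesc_antitone P
  let k1 : Fin d := ⟨S.card - 1, by omega⟩
  set c := p k1 with hc
  have hc0 : 0 < c := eigsDesc_pos hP _
  let pt : Fin d → ℝ := fun j => max (p j) c
  have hss : s * s = s * 1 * s := by rw [mul_one]
  have hsp1 : IsStrictlyPositive (s * s) := by
    rw [hss]; exact sp_conj (isStrictlyPositive_one) hs
  have hPt : IsStrictlyPositive (dg V pt) := dg_sp hV fun i => lt_max_of_lt_right hc0
  have hr : ∀ i, eigsDesc (s * P * s) i ≤ eigsDesc (s * dg V pt * s) i := by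
    intro i
    refine eigsDesc_mono (sp_herm (sp_conj hP hs)) (sp_herm (sp_conj hPt hs)) ?_ i
    rw [hPV]
    exact hs.isSelfAdjoint.conjugate_le_conjugate (dg_mono V fun i => le_max_left _ _)
  have hm : ∀ i, c * eigsDesc (s * s) i ≤ eigsDesc (s * dg V pt * s) i := by
    intro i
    have h1 : s * (c • 1) * s = c • (s * s) := by simp
    have h2 : eigsDesc (c • (s * s)) i = c * eigsDesc (s * s) i := by
      obtain ⟨U, hU, h⟩ := eigsDesc_spec (sp_herm hsp1)
      have h3 : c • (s * s) = dg U (fun i => c * eigsDesc (s * s) i) := by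
        rw [← dg_mul hU, ← h, dg_one hU]; simp
      rw [h3, eigsDesc_dg hU]
      intro i j hij
      exact mul_le_mul_of_nonneg_left (eigsDesc_antitone _ hij) hc0.le
    rw [← h2, ← h1]
    refine eigsDesc_mono ?_ (sp_herm (sp_conj hPt hs)) ?_ i
    · rw [h1, ← Matrix.one_mul (s*s)]
      have := (sp_herm hsp1).smul (k := c) (by simp [IsSelfAdjoint])
      simpa using this
    · rw [← dg_one hV]
      exact hs.isSelfAdjoint.conjugate_le_conjugate (dg_mono V fun i => le_max_right _ _)
  have hdet : ∏ i, eigsDesc (s * dg V pt * s) i = (∏ i, eigsDesc (s * s) i) * ∏ i, pt i := by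
    have h1 := eigsDesc_det (sp_herm (sp_conj hPt hs))
    have h2 := eigsDesc_det (sp_herm hsp1)
    rw [Matrix.det_mul, Matrix.det_mul, mul_right_comm, ← Matrix.det_mul, h2, dg_det hV] at h1
    exact_mod_cast h1.symm
  have hQc : Q.card = S.card := by
    rw [hQ, Fin.card_filter_val_lt, min_eq_right hSd]
  have hpt : ∏ i, pt i = (∏ i ∈ Q, p i) * c ^ (Sᶜ).card := by
    rw [← Finset.prod_mul_prod_compl Q]
    congr 1
    · refine Finset.prod_congr rfl fun i hi => max_eq_left (hpa ?_)
      rw [hQ, Finset.mem_filter] at hi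
      rw [Fin.le_def]; simp only [k1]; omega
    · rw [Finset.card_compl, ← hQc, ← Finset.card_compl, ← Finset.prod_const]
      refine Finset.prod_congr rfl fun i hi => max_eq_right (hpa ?_)
      rw [Finset.mem_compl, hQ, Finset.mem_filter] at hi
      simp only [Finset.mem_univ, true_and] at hi
      rw [Fin.le_def]; simp only [k1]; omega
  have hpos := eigsDesc_pos hsp1
  have h1 : (∏ i ∈ S, eigsDesc (s * P * s) i) * (∏ i ∈ Sᶜ, c * eigsDesc (s * s) i) ≤
      (∏ i ∈ S, eigsDesc (s * dg V pt * s) i) * (∏ i ∈ Sᶜ, eigsDesc (s * dg V pt * s) i) := by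
    have hn := eigsDesc_nonneg (sp_conj hP hs).nonneg
    have hn2 := eigsDesc_nonneg (sp_conj hPt hs).nonneg
    refine mul_le_mul (Finset.prod_le_prod (fun i _ => hn i) fun i _ => hr i)
      (Finset.prod_le_prod (fun i _ => mul_nonneg hc0.le (hpos i).le) fun i _ => hm i)
      (Finset.prod_nonneg fun i _ => mul_nonneg hc0.le (hpos i).le)
      (Finset.prod_nonneg fun i _ => hn2 i)
  rw [Finset.prod_mul_prod_compl, hdet, hpt, Finset.prod_mul_distrib, Finset.prod_const,
    ← Finset.prod_mul_prod_compl S (eigsDesc (s * s))] at h1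
  have hq : 0 < c ^ (Sᶜ).card * ∏ i ∈ Sᶜ, eigsDesc (s * s) i :=
    mul_pos (pow_pos hc0 _) (Finset.prod_pos fun i _ => hpos i)
  refine le_of_mul_le_mul_right (h1.trans (le_of_eq ?_)) hq
  ring

lemma gm_facts {X Y : Matrix (Fin d) (Fin d) ℂ} (hX : IsStrictlyPositive X)
    (hY : IsStrictlyPositive Y) (S : Finset (Fin d)) :
    (∏ i ∈ S, eigsDesc X i.rev * eigsDesc Y i ≤
      ∏ i ∈ Finset.univ.filter (fun j : Fin d => j.val < S.card), eigsDesc (gm X Y) i ^ 2) ∧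
    (∏ i ∈ S, eigsDesc (gm X Y) i ^ 2 ≤ (∏ i ∈ S, eigsDesc X i) *
      ∏ i ∈ Finset.univ.filter (fun j : Fin d => j.val < S.card), eigsDesc Y i) := by
  set G := gm X Y with hG
  have hGp : IsStrictlyPositive G := gm_pos hX hY
  have hGG : IsStrictlyPositive (G * G) := by
    have : G * G = G * 1 * G := by rw [mul_one]
    rw [this]; exact sp_conj isStrictlyPositive_one hGp
  obtain ⟨U, hU, hGU⟩ := eigsDesc_spec (sp_herm hGp)
  have hG2 : eigsDesc (G * G) = fun i => eigsDesc G i ^ 2 := by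
    have : G * G = dg U (fun i => eigsDesc G i * eigsDesc G i) := by
      rw [← dg_mul hU, ← hGU]
    rw [this, eigsDesc_dg hU]
    · ext i; ring
    · intro i j hij
      have h := eigsDesc_antitone G hij
      exact mul_le_mul h h (eigsDesc_pos hGp _).le (eigsDesc_pos hGp _).le
  obtain ⟨V, hV, hXV⟩ := eigsDesc_spec (sp_herm hX)
  have hx := eigsDesc_pos hX
  set x := eigsDesc X with hxdef
  set r : Matrix (Fin d) (Fin d) ℂ := dg V (fun i => (Real.sqrt (x i))⁻¹) with hr
  set q : Matrix (Fin d) (Fin d) ℂ := dg V (fun i => Real.sqrt (x i)) with hq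
  have hrp : IsStrictlyPositive r := dg_sp hV fun i => inv_pos.2 (Real.sqrt_pos.2 (hx i))
  have hqp : IsStrictlyPositive q := dg_sp hV fun i => Real.sqrt_pos.2 (hx i)
  have hqr : q * r = 1 := by
    rw [hq, hr, dg_mul hV]
    have : (fun i => Real.sqrt (x i) * (Real.sqrt (x i))⁻¹) = fun _ => (1:ℝ) := by
      ext i; exact mul_inv_cancel₀ (Real.sqrt_pos.2 (hx i)).ne'
    rw [this, dg_one hV, one_smul]
  have hrq : r * q = 1 := mul_eq_one_comm.1 hqr
  have hqq : q * q = X := by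
    rw [hq, dg_mul hV]
    conv_rhs => rw [hXV]
    congr 1; ext i; exact Real.mul_self_sqrt (hx i).le
  have hrrX : r * r * X = 1 := by
    rw [← hqq]
    calc r * r * (q * q) = r * (r * q) * q := by simp only [mul_assoc]
      _ = 1 := by rw [hrq, mul_one, hrq]
  have hXi : r * r = X ^ (-1 : ℝ) := by
    calc r * r = r * r * (X * X ^ (-1:ℝ)) := by rw [rp_mul_neg_one hX, mul_one]
      _ = _ := by rw [← mul_assoc, hrrX, one_mul]
  have hYe : G * (r * r) * G = Y := by rw [hXi]; exact gm_eq hX hY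
  have hrev : eigsDesc (r * r) = fun i => (x i.rev)⁻¹ := by
    have h1 : r * r = dg V (fun i => (x i)⁻¹) := by
      rw [hr, dg_mul hV]; congr 1; ext i
      rw [← mul_inv, Real.mul_self_sqrt (hx i).le]
    obtain ⟨W, hW, h2⟩ := dg_perm hV (fun i => (x i)⁻¹) Fin.revPerm
    rw [h1, h2, eigsDesc_dg hW]
    · rfl
    · intro i j hij
      simp only [Function.comp, Fin.revPerm_apply]
      exact inv_anti₀ (hx _) (eigsDesc_antitone X (Fin.rev_le_rev.2 hij))
  have hflip : eigsDesc (r * (G * G) * r) = eigsDesc Y := by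
    obtain ⟨W, hW, h⟩ := eigsDesc_spec (sp_herm hY)
    have hT : (r * G)ᴴ * (r * G) = dg W (eigsDesc Y) := by
      rw [Matrix.conjTranspose_mul, (sp_herm hGp).eq, (sp_herm hrp).eq, ← h, ← hYe]
      simp only [Matrix.mul_assoc]
    obtain ⟨W', hW', h'⟩ := flip_dg hW (eigsDesc_pos hY) hT
    have : r * (G * G) * r = dg W' (eigsDesc Y) := by
      rw [← h', Matrix.conjTranspose_mul, (sp_herm hGp).eq, (sp_herm hrp).eq]
      simp only [Matrix.mul_assoc]
    rw [this, eigsDesc_dg hW' (eigsDesc_antitone _)]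
  constructor
  · have h1 := lidskii hrp hGG S
    rw [hflip, hrev, hG2] at h1
    simp only [] at h1
    have hxp : 0 < ∏ i ∈ S, x i.rev := Finset.prod_pos fun i _ => hx _
    rw [Finset.prod_mul_distrib]
    have h2 := mul_le_mul_of_nonneg_left h1 hxp.le
    rw [← mul_assoc, ← Finset.prod_mul_distrib (f := fun i : Fin d => x i.rev)
      (g := fun i : Fin d => (x i.rev)⁻¹)] at h2
    have h3 : ∀ i ∈ S, x i.rev * (x i.rev)⁻¹ = 1 := fun i _ => mul_inv_cancel₀ (hx _).ne'
    rwa [Finset.prod_congr rfl h3, Finset.prod_const_one, one_mul] at h2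
  · have h1 := lidskii hqp (sp_conj hGG hrp) S
    have h2 : q * (r * (G * G) * r) * q = G * G := by
      calc q * (r * (G * G) * r) * q = (q * r) * (G * G) * (r * q) := by simp only [mul_assoc]
        _ = _ := by rw [hqr, hrq, one_mul, mul_one]
    rw [h2, hG2, hqq, hflip] at h1
    exact h1

end Lidskii

section Compound

open scoped MatrixOrder Matrix.Norms.L2Operator

variable {d : ℕ}

/-- index type of the `k`-th compound matrix -/
abbrev PC (d k : ℕ) : Type := Set.powersetCard (Fin d) k

/-- basis of the exterior power -/
noncomputable def cbasis (d k : ℕ) :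
    Module.Basis (PC d k) ℂ (⋀[ℂ]^k (Fin d → ℂ)) :=
  (Pi.basisFun ℂ (Fin d)).exteriorPower k

/-- the `k`-th compound matrix -/
noncomputable def cpd (k : ℕ) (A : Matrix (Fin d) (Fin d) ℂ) : Matrix (PC d k) (PC d k) ℂ :=
  LinearMap.toMatrix (cbasis d k) (cbasis d k) (exteriorPower.map k (Matrix.toLin' A))

lemma cpd_mul (k : ℕ) (A B : Matrix (Fin d) (Fin d) ℂ) : cpd k (A * B) = cpd k A * cpd k B := by
  unfold cpd
  rw [Matrix.toLin'_mul, exteriorPower.map_comp, LinearMap.toMatrix_comp _ (cbasis d k)]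

lemma cpd_one (k : ℕ) : cpd k (1 : Matrix (Fin d) (Fin d) ℂ) = 1 := by
  unfold cpd
  rw [Matrix.toLin'_one, exteriorPower.map_id, LinearMap.toMatrix_id]

lemma cpd_apply (k : ℕ) (A : Matrix (Fin d) (Fin d) ℂ) (s t : PC d k) :
    cpd k A s t = (Matrix.of fun i j => A (Set.powersetCard.ofFinEmbEquiv.symm s j)
      (Set.powersetCard.ofFinEmbEquiv.symm t i)).det := by
  unfold cpd
  rw [LinearMap.toMatrix_apply, cbasis, exteriorPower.basis_repr_apply, exteriorPower.basis_apply,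
    exteriorPower.ιMulti_family, exteriorPower.map_apply_ιMulti,
    exteriorPower.ιMultiDual_apply_ιMulti]
  congr 1
  ext i j
  simp

lemma cpd_conj (k : ℕ) (A : Matrix (Fin d) (Fin d) ℂ) : cpd k Aᴴ = (cpd k A)ᴴ := by
  ext s t
  rw [Matrix.conjTranspose_apply, cpd_apply, cpd_apply, ← Matrix.det_conjTranspose]
  congr 1

lemma cpd_diag (k : ℕ) (e : Fin d → ℂ) : cpd k (Matrix.diagonal e) =
    Matrix.diagonal fun s : PC d k => ∏ j : Fin k, e (Set.powersetCard.ofFinEmbEquiv.symm s j) := by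
  ext s t
  unfold cpd
  rw [LinearMap.toMatrix_apply]
  have h : (exteriorPower.map k (Matrix.toLin' (Matrix.diagonal e))) (cbasis d k t) =
      (∏ j : Fin k, e (Set.powersetCard.ofFinEmbEquiv.symm t j)) • cbasis d k t := by
    rw [cbasis, exteriorPower.basis_apply, exteriorPower.ιMulti_family,
      exteriorPower.map_apply_ιMulti]
    have h2 := (exteriorPower.ιMulti ℂ k (M := Fin d → ℂ)).toMultilinearMap.map_smul_univ
      (fun j => e (Set.powersetCard.ofFinEmbEquiv.symm t j))
      ((Pi.basisFun ℂ (Fin d)) ∘ (Set.powersetCard.ofFinEmbEquiv.symm t))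
    simp only [AlternatingMap.coe_multilinearMap] at h2
    rw [← h2]
    congr 1
    ext i j
    simp only [Function.comp_apply, Matrix.toLin'_apply, Matrix.mulVec_diagonal, Pi.basisFun_apply,
      Pi.smul_apply, smul_eq_mul]
    by_cases hij : j = Set.powersetCard.ofFinEmbEquiv.symm t i
    · rw [hij]
    · simp [hij]
  rw [h, map_smul, Module.Basis.repr_self, Finsupp.smul_apply, Matrix.diagonal_apply,
    Finsupp.single_apply]
  by_cases hst : s = t
  · simp [hst]
  · simp [hst, Ne.symm hst]

lemma cpd_unitary (k : ℕ) {V : Matrix (Fin d) (Fin d) ℂ} (hV : V ∈ Matrix.unitaryGroup (Fin d) ℂ) :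
    cpd k V ∈ Matrix.unitaryGroup (PC d k) ℂ := by
  rw [Matrix.mem_unitaryGroup_iff, Matrix.star_eq_conjTranspose, ← cpd_conj, ← cpd_mul,
    uni_right hV, cpd_one]

/-- products over `k`-subsets -/
noncomputable def cpr (k : ℕ) (e : Fin d → ℝ) (s : PC d k) : ℝ :=
  ∏ j : Fin k, e (Set.powersetCard.ofFinEmbEquiv.symm s j)

lemma cpd_dg (k : ℕ) (V : Matrix (Fin d) (Fin d) ℂ) (e : Fin d → ℝ) :
    cpd k (dg V e) = dg (cpd k V) (cpr k e) := by
  unfold dg cpr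
  rw [cpd_mul, cpd_mul, cpd_conj, cpd_diag]
  simp

lemma cpd_sp (k : ℕ) {M : Matrix (Fin d) (Fin d) ℂ} (hM : IsStrictlyPositive M) :
    IsStrictlyPositive (cpd k M) := by
  obtain ⟨V, hV, h⟩ := eigsDesc_spec (sp_herm hM)
  rw [h, cpd_dg]
  exact dg_sp (cpd_unitary k hV) fun s => Finset.prod_pos fun j _ => eigsDesc_pos hM _

lemma cpd_rpow (k : ℕ) {M : Matrix (Fin d) (Fin d) ℂ} (hM : IsStrictlyPositive M) (r : ℝ) :
    cpd k (M ^ r) = cpd k M ^ r := by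
  obtain ⟨V, hV, h⟩ := eigsDesc_spec (sp_herm hM)
  rw [h, rpow_dg hV (fun i => (eigsDesc_pos hM i).le), cpd_dg, cpd_dg,
    rpow_dg (e := cpr k (eigsDesc M)) (cpd_unitary k hV) fun s => Finset.prod_nonneg fun j _ => (eigsDesc_pos hM _).le]
  congr 1
  ext s
  exact Real.finsetProd_rpow _ _ (fun j _ => (eigsDesc_pos hM _).le) r

lemma cpd_gm (k : ℕ) {X Y : Matrix (Fin d) (Fin d) ℂ} (hX : IsStrictlyPositive X)
    (hY : IsStrictlyPositive Y) : cpd k (gm X Y) = gm (cpd k X) (cpd k Y) := by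
  symm
  refine gm_unique (xi := cpd k (X ^ (-1 : ℝ))) (cpd_sp k hX) (cpd_sp k (gm_pos hX hY)).nonneg ?_ ?_
  · rw [← cpd_mul, rp_neg_one_mul hX, cpd_one]
  · rw [← cpd_mul, ← cpd_mul, gm_eq hX hY]

lemma fin_le_emb {k : ℕ} (f : Fin k ↪o Fin d) (j : Fin k) : j.val ≤ (f j).val := by
  obtain ⟨j, hj⟩ := j
  induction j with
  | zero => simp
  | succ j ih =>
    have h1 := ih (by omega)
    have h2 : f ⟨j, by omega⟩ < f ⟨j + 1, hj⟩ := f.strictMono (by simp [Fin.lt_def])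
    rw [Fin.lt_def] at h2
    simp only at h1 ⊢
    omega

lemma cpr_le {k : ℕ} (hk : k ≤ d) {e : Fin d → ℝ} (he : Antitone e) (h0 : ∀ i, 0 ≤ e i)
    (s : PC d k) : cpr k e s ≤ ∏ j : Fin k, e (Fin.castLE hk j) := by
  refine Finset.prod_le_prod (fun _ _ => h0 _) fun j _ => he ?_
  exact fin_le_emb _ j

lemma cpr_top {k : ℕ} (hk : k ≤ d) (e : Fin d → ℝ) :
    cpr k e (Set.powersetCard.ofFinEmbEquiv (Fin.castLEOrderEmb hk)) =
      ∏ j : Fin k, e (Fin.castLE hk j) := by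
  unfold cpr
  rw [Equiv.symm_apply_apply]
  rfl

lemma ando_hiai_prod {X Y : Matrix (Fin d) (Fin d) ℂ} (hX : IsStrictlyPositive X)
    (hY : IsStrictlyPositive Y) {r : ℝ} (h1 : 1 ≤ r) (h2 : r ≤ 2) {k : ℕ} (hk : k ≤ d) :
    ∏ j : Fin k, eigsDesc (gm (X ^ r) (Y ^ r)) (Fin.castLE hk j) ≤
      (∏ j : Fin k, eigsDesc (gm X Y) (Fin.castLE hk j)) ^ r := by
  have rsp : ∀ {Z : Matrix (Fin d) (Fin d) ℂ}, IsStrictlyPositive Z →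
      IsStrictlyPositive (Z ^ r) := by
    intro Z hZ
    obtain ⟨V, hV, h⟩ := eigsDesc_spec (sp_herm hZ)
    rw [h, rpow_dg hV (fun i => (eigsDesc_pos hZ i).le)]
    exact dg_sp hV fun i => Real.rpow_pos_of_pos (eigsDesc_pos hZ i) _
  have hG := gm_pos hX hY
  have hG' := gm_pos (rsp hX) (rsp hY)
  obtain ⟨U, hU, h⟩ := eigsDesc_spec (sp_herm hG)
  obtain ⟨U', hU', h'⟩ := eigsDesc_spec (sp_herm hG')
  have hc : 0 < ∏ j : Fin k, eigsDesc (gm X Y) (Fin.castLE hk j) :=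
    Finset.prod_pos fun j _ => eigsDesc_pos hG _
  have h3 : gm (cpd k X) (cpd k Y) ≤
      (∏ j : Fin k, eigsDesc (gm X Y) (Fin.castLE hk j)) • 1 := by
    rw [← cpd_gm k hX hY]
    conv_lhs => rw [h]
    rw [cpd_dg, dg_le_nonneg (cpd_unitary k hU)]
    exact cpr_le hk (eigsDesc_antitone _) fun i => (eigsDesc_pos hG i).le
  have h4 := ando_hiai (cpd_sp k hX) (cpd_sp k hY) hc h3 h1 h2
  rw [← cpd_rpow k hX, ← cpd_rpow k hY, ← cpd_gm k (rsp hX) (rsp hY), h', cpd_dg,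
    dg_le_nonneg (cpd_unitary k hU')] at h4
  rw [← cpr_top]
  exact h4 _

end Compound

section GeoLimit

open scoped MatrixOrder Matrix.Norms.L2Operator

variable {d : ℕ}

lemma dg_trace {V : Matrix (Fin d) (Fin d) ℂ} (hV : V ∈ Matrix.unitaryGroup (Fin d) ℂ)
    (e : Fin d → ℝ) : (dg V e).trace = ((∑ i, e i : ℝ) : ℂ) := by
  unfold dg
  rw [Matrix.trace_mul_comm, ← Matrix.mul_assoc, uni_left hV, Matrix.one_mul, Matrix.trace_diagonal]
  simp

lemma norm_le_trace {D : Matrix (Fin d) (Fin d) ℂ} (hD : 0 ≤ D) : ‖D‖ ≤ D.trace.re := by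
  obtain ⟨V, hV, h⟩ := eigsDesc_spec (Matrix.nonneg_iff_posSemidef.1 hD).isHermitian
  have h0 := eigsDesc_nonneg hD
  have ht : D.trace.re = ∑ i, eigsDesc D i := by
    conv_lhs => rw [h]
    rw [dg_trace hV, Complex.ofReal_re]
  have h0t : 0 ≤ D.trace.re := by rw [ht]; exact Finset.sum_nonneg fun i _ => h0 i
  rw [CStarAlgebra.norm_le_iff_le_algebraMap D h0t hD, Algebra.algebraMap_eq_smul_one, h,
    dg_le_nonneg hV, ← h, ht]
  intro i
  exact Finset.single_le_sum (fun i _ => h0 i) (Finset.mem_univ i)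

lemma mono_conv {F : ℝ → Matrix (Fin d) (Fin d) ℂ}
    (hF : ∀ s t, 0 < s → s ≤ t → F s ≤ F t) (h0 : ∀ t, 0 < t → 0 ≤ F t) :
    ∃ L, Tendsto F (𝓝[>] (0 : ℝ)) (𝓝 L) := by
  have hab : ∀ s t, 0 < s → 0 < t → ‖F s - F t‖ ≤ |(F s).trace.re - (F t).trace.re| := by
    have key : ∀ s t, 0 < s → s ≤ t → ‖F t - F s‖ ≤ |(F t).trace.re - (F s).trace.re| := by
      intro s t hs hst
      have := norm_le_trace (sub_nonneg.2 (hF s t hs hst))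
      rw [Matrix.trace_sub, Complex.sub_re] at this
      exact this.trans (le_abs_self _)
    intro s t hs ht
    rcases le_total s t with h | h
    · rw [norm_sub_rev, abs_sub_comm]; exact key s t hs h
    · exact key t s ht h
  have htm : ∀ s t, 0 < s → s ≤ t → (F s).trace.re ≤ (F t).trace.re := by
    intro s t hs hst
    have := (norm_nonneg _).trans (norm_le_trace (sub_nonneg.2 (hF s t hs hst)))
    rw [Matrix.trace_sub, Complex.sub_re] at this
    linarith
  have hconv : ∃ l, Tendsto (fun t => (F t).trace.re) (𝓝[>] (0 : ℝ)) (𝓝 l) := by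
    refine ⟨_, MonotoneOn.tendsto_nhdsGT (fun s hs t _ hst => htm s t hs hst) ?_⟩
    refine ⟨0, ?_⟩
    rintro _ ⟨t, ht, rfl⟩
    exact (norm_nonneg _).trans (norm_le_trace (h0 t ht))
  obtain ⟨l, hl⟩ := hconv
  have hc := hl.cauchy_map
  have hcF : Cauchy (Filter.map F (𝓝[>] (0 : ℝ))) := by
    rw [Metric.cauchy_iff] at hc ⊢
    refine ⟨inferInstance, fun η hη => ?_⟩
    obtain ⟨T, hT, hTT⟩ := hc.2 η hη
    refine ⟨F '' ({t | (F t).trace.re ∈ T} ∩ Set.Ioi 0), ?_, ?_⟩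
    · exact Filter.image_mem_map (Filter.inter_mem (Filter.mem_map.1 hT) self_mem_nhdsWithin)
    · rintro _ ⟨s, ⟨hs, hs0⟩, rfl⟩ _ ⟨t, ⟨ht, ht0⟩, rfl⟩
      rw [dist_eq_norm]
      refine (hab s t hs0 ht0).trans_lt ?_
      have := hTT _ hs _ ht
      rwa [Real.dist_eq] at this
  have : CompleteSpace (Matrix (Fin d) (Fin d) ℂ) := FiniteDimensional.complete ℂ _
  exact cauchy_map_iff_exists_tendsto.1 hcF

lemma dg_shift {V : Matrix (Fin d) (Fin d) ℂ} (hV : V ∈ Matrix.unitaryGroup (Fin d) ℂ)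
    (x : Fin d → ℝ) (ε : ℝ) : dg V x + (ε : ℂ) • 1 = dg V (fun i => x i + ε) := by
  rw [← dg_add, dg_one hV]
  congr 1

/-- the regularized mean -/
noncomputable def gme (V W : Matrix (Fin d) (Fin d) ℂ) (x y : Fin d → ℝ) (ε : ℝ) :
    Matrix (Fin d) (Fin d) ℂ :=
  gm (dg V (fun i => x i + ε)) (dg W (fun i => y i + ε))

variable {V W : Matrix (Fin d) (Fin d) ℂ} {x y : Fin d → ℝ}

lemma shift_sp (hV : V ∈ Matrix.unitaryGroup (Fin d) ℂ) (hx : ∀ i, 0 ≤ x i) {ε : ℝ} (hε : 0 < ε) :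
    IsStrictlyPositive (dg V (fun i => x i + ε)) :=
  dg_sp hV fun i => add_pos_of_nonneg_of_pos (hx i) hε

lemma gme_sp (hV : V ∈ Matrix.unitaryGroup (Fin d) ℂ) (hW : W ∈ Matrix.unitaryGroup (Fin d) ℂ)
    (hx : ∀ i, 0 ≤ x i) (hy : ∀ i, 0 ≤ y i) {ε : ℝ} (hε : 0 < ε) :
    IsStrictlyPositive (gme V W x y ε) :=
  gm_pos (shift_sp hV hx hε) (shift_sp hW hy hε)

lemma geoMean_tendsto (hV : V ∈ Matrix.unitaryGroup (Fin d) ℂ)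
    (hW : W ∈ Matrix.unitaryGroup (Fin d) ℂ) (hx : ∀ i, 0 ≤ x i) (hy : ∀ i, 0 ≤ y i) :
    Tendsto (gme V W x y) (𝓝[>] (0 : ℝ)) (𝓝 (geoMean (dg V x) (dg W y))) := by
  obtain ⟨L, hL⟩ := mono_conv (F := gme V W x y)
    (fun s t hs hst => gm_mono (shift_sp hV hx hs) (shift_sp hW hy hs)
      (dg_mono V fun i => by linarith) (dg_mono W fun i => by linarith))
    (fun t ht => (gme_sp hV hW hx hy ht).nonneg)
  have h2 : Tendsto (fun ε : ℝ => geoMeanPD (dg V x + (ε : ℂ) • 1) (dg W y + (ε : ℂ) • 1))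
      (𝓝[>] (0 : ℝ)) (𝓝 L) := by
    refine hL.congr' ?_
    filter_upwards [self_mem_nhdsWithin] with ε hε
    rw [dg_shift hV, dg_shift hW, geoMeanPD_eq_gm (shift_sp hV hx hε) (shift_sp hW hy hε), gme]
  have h3 : geoMean (dg V x) (dg W y) = L := h2.limUnder_eq
  rw [h3]; exact hL

lemma geoMean_nonneg (hV : V ∈ Matrix.unitaryGroup (Fin d) ℂ)
    (hW : W ∈ Matrix.unitaryGroup (Fin d) ℂ) (hx : ∀ i, 0 ≤ x i) (hy : ∀ i, 0 ≤ y i) :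
    0 ≤ geoMean (dg V x) (dg W y) := by
  refine ge_of_tendsto (geoMean_tendsto hV hW hx hy) ?_
  filter_upwards [self_mem_nhdsWithin] with ε hε
  exact (gme_sp hV hW hx hy hε).nonneg

lemma geoMean_eigs (hV : V ∈ Matrix.unitaryGroup (Fin d) ℂ)
    (hW : W ∈ Matrix.unitaryGroup (Fin d) ℂ) (hx : ∀ i, 0 ≤ x i) (hy : ∀ i, 0 ≤ y i) (i : Fin d) :
    Tendsto (fun ε => eigsDesc (gme V W x y ε) i) (𝓝[>] (0 : ℝ))
      (𝓝 (eigsDesc (geoMean (dg V x) (dg W y)) i)) := by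
  refine eigsDesc_tendsto ?_
    (Matrix.nonneg_iff_posSemidef.1 (geoMean_nonneg hV hW hx hy)).isHermitian
    (geoMean_tendsto hV hW hx hy) i
  filter_upwards [self_mem_nhdsWithin] with ε hε
  exact sp_herm (gme_sp hV hW hx hy hε)

lemma shift_tendsto (c : ℝ) : Tendsto (fun ε : ℝ => c + ε) (𝓝[>] (0 : ℝ)) (𝓝 c) := by
  have : Tendsto (fun ε : ℝ => c + ε) (𝓝 (0 : ℝ)) (𝓝 (c + 0)) :=
    tendsto_const_nhds.add tendsto_id
  rw [add_zero] at this
  exact this.mono_left nhdsWithin_le_nhds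

lemma shift_antitone (hx : Antitone x) (ε : ℝ) : Antitone fun i => x i + ε :=
  fun i j hij => by simpa using hx hij

lemma geoMean_lower (hV : V ∈ Matrix.unitaryGroup (Fin d) ℂ)
    (hW : W ∈ Matrix.unitaryGroup (Fin d) ℂ) (hx : ∀ i, 0 ≤ x i) (hy : ∀ i, 0 ≤ y i)
    (hxa : Antitone x) (hya : Antitone y) (S : Finset (Fin d)) :
    ∏ i ∈ S, x i.rev * y i ≤ ∏ i ∈ Finset.univ.filter (fun j : Fin d => j.val < S.card),
      eigsDesc (geoMean (dg V x) (dg W y)) i ^ 2 := by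
  refine le_of_tendsto_of_tendsto (b := 𝓝[>] (0 : ℝ))
    (tendsto_finsetProd S fun i _ => (shift_tendsto (x i.rev)).mul (shift_tendsto (y i)))
    (tendsto_finsetProd _ fun i _ => (geoMean_eigs hV hW hx hy i).pow 2) ?_
  filter_upwards [self_mem_nhdsWithin] with ε hε
  have := (gm_facts (shift_sp hV hx hε) (shift_sp hW hy hε) S).1
  rw [eigsDesc_dg hV (shift_antitone hxa ε), eigsDesc_dg hW (shift_antitone hya ε)] at this
  exact this

lemma geoMean_upper (hV : V ∈ Matrix.unitaryGroup (Fin d) ℂ)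
    (hW : W ∈ Matrix.unitaryGroup (Fin d) ℂ) (hx : ∀ i, 0 ≤ x i) (hy : ∀ i, 0 ≤ y i)
    (hxa : Antitone x) (hya : Antitone y) (S : Finset (Fin d)) :
    ∏ i ∈ S, eigsDesc (geoMean (dg V x) (dg W y)) i ^ 2 ≤ (∏ i ∈ S, x i) *
      ∏ i ∈ Finset.univ.filter (fun j : Fin d => j.val < S.card), y i := by
  refine le_of_tendsto_of_tendsto (b := 𝓝[>] (0 : ℝ))
    (tendsto_finsetProd _ fun i _ => (geoMean_eigs hV hW hx hy i).pow 2)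
    ((tendsto_finsetProd S fun i _ => (shift_tendsto (x i))).mul
      (tendsto_finsetProd _ fun i _ => (shift_tendsto (y i)))) ?_
  filter_upwards [self_mem_nhdsWithin] with ε hε
  have := (gm_facts (shift_sp hV hx hε) (shift_sp hW hy hε) S).2
  rw [eigsDesc_dg hV (shift_antitone hxa ε), eigsDesc_dg hW (shift_antitone hya ε)] at this
  exact this

lemma geoMean_last (hd : 0 < d) (hV : V ∈ Matrix.unitaryGroup (Fin d) ℂ)
    (hW : W ∈ Matrix.unitaryGroup (Fin d) ℂ) (hx : ∀ i, 0 ≤ x i) (hy : ∀ i, 0 ≤ y i)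
    (hxa : Antitone x) (hya : Antitone y) :
    x ⟨d - 1, Nat.sub_lt hd one_pos⟩ * y ⟨d - 1, Nat.sub_lt hd one_pos⟩ ≤
      eigsDesc (geoMean (dg V x) (dg W y)) ⟨d - 1, Nat.sub_lt hd one_pos⟩ ^ 2 := by
  set l : Fin d := ⟨d - 1, Nat.sub_lt hd one_pos⟩ with hl
  refine le_of_tendsto_of_tendsto (b := 𝓝[>] (0 : ℝ))
    ((shift_tendsto (x l)).mul (shift_tendsto (y l))) ((geoMean_eigs hV hW hx hy l).pow 2) ?_
  filter_upwards [self_mem_nhdsWithin] with ε hε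
  have h1 := (gm_facts (shift_sp hV hx hε) (shift_sp hW hy hε) Finset.univ).1
  have h2 := (gm_facts (shift_sp hV hx hε) (shift_sp hW hy hε) (Finset.univ.erase l)).2
  rw [eigsDesc_dg hV (shift_antitone hxa ε), eigsDesc_dg hW (shift_antitone hya ε)] at h1 h2
  have hf1 : Finset.univ.filter (fun j : Fin d => j.val < (Finset.univ : Finset (Fin d)).card) =
      Finset.univ := by
    ext j; simp
  have hf2 : Finset.univ.filter (fun j : Fin d => j.val < (Finset.univ.erase l).card) =
      Finset.univ.erase l := by
    ext j
    rw [Finset.card_erase_of_mem (Finset.mem_univ _)]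
    simp only [Finset.card_univ, Fintype.card_fin, Finset.mem_filter, Finset.mem_univ, true_and,
      Finset.mem_erase, and_true, ne_eq, Fin.ext_iff, hl]
    omega
  rw [hf1] at h1
  rw [hf2] at h2
  have hxp : ∀ i, 0 < x i + ε := fun i => add_pos_of_nonneg_of_pos (hx i) hε
  have hyp : ∀ i, 0 < y i + ε := fun i => add_pos_of_nonneg_of_pos (hy i) hε
  have hr : ∏ i : Fin d, (x i.rev + ε) = ∏ i, (x i + ε) :=
    Equiv.prod_comp Fin.revPerm (fun i => x i + ε)
  rw [Finset.prod_mul_distrib, hr, ← Finset.mul_prod_erase _ _ (Finset.mem_univ l),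
    ← Finset.mul_prod_erase (a := l) _ (fun i => y i + ε) (Finset.mem_univ l),
    ← Finset.mul_prod_erase (a := l) _ (fun i => eigsDesc _ i ^ 2) (Finset.mem_univ l)] at h1
  have hq : 0 < (∏ i ∈ Finset.univ.erase l, (x i + ε)) * ∏ i ∈ Finset.univ.erase l, (y i + ε) :=
    mul_pos (Finset.prod_pos fun i _ => hxp i) (Finset.prod_pos fun i _ => hyp i)
  refine le_of_mul_le_mul_right ?_ hq
  calc (x l + ε) * (y l + ε) * ((∏ i ∈ Finset.univ.erase l, (x i + ε)) *
        ∏ i ∈ Finset.univ.erase l, (y i + ε)) = _ := by ring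
    _ ≤ _ := h1
    _ ≤ _ := mul_le_mul_of_nonneg_left h2 (by positivity)

lemma geoMean_ando (hV : V ∈ Matrix.unitaryGroup (Fin d) ℂ)
    (hW : W ∈ Matrix.unitaryGroup (Fin d) ℂ) (hx : ∀ i, 0 ≤ x i) (hy : ∀ i, 0 ≤ y i)
    {r : ℝ} (h1 : 1 ≤ r) (h2 : r ≤ 2) {k : ℕ} (hk : k ≤ d) :
    ∏ j : Fin k, eigsDesc (geoMean (dg V fun i => x i ^ r) (dg W fun i => y i ^ r))
        (Fin.castLE hk j) ≤
      (∏ j : Fin k, eigsDesc (geoMean (dg V x) (dg W y)) (Fin.castLE hk j)) ^ r := by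
  have hr0 : 0 < r := by linarith
  have hx' : ∀ i, 0 ≤ x i ^ r := fun i => Real.rpow_nonneg (hx i) r
  have hy' : ∀ i, 0 ≤ y i ^ r := fun i => Real.rpow_nonneg (hy i) r
  have ht : Tendsto (fun ε : ℝ => ε ^ r) (𝓝[>] (0 : ℝ)) (𝓝[>] (0 : ℝ)) := by
    refine tendsto_nhdsWithin_iff.2 ⟨?_, ?_⟩
    · have := (Real.continuousAt_rpow_const 0 r (Or.inr hr0.le)).tendsto
      rw [Real.zero_rpow hr0.ne'] at this
      exact this.mono_left nhdsWithin_le_nhds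
    · filter_upwards [self_mem_nhdsWithin] with ε hε using Real.rpow_pos_of_pos hε r
  refine le_of_tendsto_of_tendsto (b := 𝓝[>] (0 : ℝ))
    (tendsto_finsetProd _ fun j _ => (geoMean_eigs hV hW hx' hy' (Fin.castLE hk j)).comp ht)
    ((tendsto_finsetProd _ fun j _ => geoMean_eigs hV hW hx hy (Fin.castLE hk j)).rpow_const
      (Or.inr hr0.le)) ?_
  filter_upwards [self_mem_nhdsWithin] with ε hε
  have hε' : 0 < ε := hε
  have hεr : 0 < ε ^ r := Real.rpow_pos_of_pos hε r
  refine le_trans ?_ (ando_hiai_prod (shift_sp hV hx hε) (shift_sp hW hy hε) h1 h2 hk)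
  have hpx : ∀ i, 0 ≤ x i + ε := fun i => add_nonneg (hx i) hε'.le
  have hpy : ∀ i, 0 ≤ y i + ε := fun i => add_nonneg (hy i) hε'.le
  rw [rpow_dg hV hpx, rpow_dg hW hpy]
  have hgp := gme_sp hV hW hx' hy' hεr
  refine Finset.prod_le_prod (fun j _ => (eigsDesc_pos hgp _).le) fun j _ => ?_
  have hsx : IsStrictlyPositive (dg V fun i => (x i + ε) ^ r) := dg_sp hV fun i =>
    Real.rpow_pos_of_pos (add_pos_of_nonneg_of_pos (hx i) hε') r
  have hsy : IsStrictlyPositive (dg W fun i => (y i + ε) ^ r) := dg_sp hW fun i =>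
    Real.rpow_pos_of_pos (add_pos_of_nonneg_of_pos (hy i) hε') r
  refine eigsDesc_mono (sp_herm hgp) (sp_herm (gm_pos hsx hsy)) ?_ _
  exact gm_mono (shift_sp hV hx' hεr) (shift_sp hW hy' hεr)
    (dg_mono V fun i => Real.add_rpow_le_rpow_add (hx i) hε'.le h1)
    (dg_mono W fun i => Real.add_rpow_le_rpow_add (hy i) hε'.le h1)

end GeoLimit

section Assembly

open scoped MatrixOrder Matrix.Norms.L2Operator

variable {d : ℕ}

lemma conv_of_prod (lam : ℝ → Fin d → ℝ) (hl : ∀ p, 0 < p → Antitone (lam p))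
    (h0 : ∀ p, 0 < p → ∀ i, 0 ≤ lam p i)
    (hP : ∀ (k : ℕ) (hk : k ≤ d) (p q : ℝ), 0 < p → p ≤ q →
      ∏ j : Fin k, lam q (Fin.castLE hk j) ≤ ∏ j : Fin k, lam p (Fin.castLE hk j)) (i : Fin d) :
    ∃ l, Tendsto (fun p => lam p i) atTop (𝓝 l) := by
  have hconv : ∀ (k : ℕ) (hk : k ≤ d), ∃ l, 0 ≤ l ∧
      Tendsto (fun p => ∏ j : Fin k, lam p (Fin.castLE hk j)) atTop (𝓝 l) := by
    intro k hk
    have hn : ∀ p, 0 < p → 0 ≤ ∏ j : Fin k, lam p (Fin.castLE hk j) := fun p hp =>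
      Finset.prod_nonneg fun j _ => h0 p hp _
    have hpos : ∀ p : ℝ, 0 < max p 1 := fun p => lt_max_of_lt_right one_pos
    have ha : Antitone fun p : ℝ => ∏ j : Fin k, lam (max p 1) (Fin.castLE hk j) :=
      fun p q hpq => hP k hk _ _ (hpos p) (max_le_max_right 1 hpq)
    have ht := tendsto_atTop_ciInf ha ⟨0, by rintro _ ⟨p, rfl⟩; exact hn _ (hpos p)⟩
    have hev : (fun p : ℝ => ∏ j : Fin k, lam (max p 1) (Fin.castLE hk j)) =ᶠ[atTop]
        fun p => ∏ j : Fin k, lam p (Fin.castLE hk j) := by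
      filter_upwards [eventually_ge_atTop (1 : ℝ)] with p hp
      rw [max_eq_left hp]
    have ht2 := ht.congr' hev
    refine ⟨_, ?_, ht2⟩
    refine ge_of_tendsto ht2 ?_
    filter_upwards [eventually_gt_atTop (0 : ℝ)] with p hp using hn p hp
  obtain ⟨l, hl0, hlt⟩ := hconv i.val i.isLt.le
  obtain ⟨m, hm0, hmt⟩ := hconv (i.val + 1) i.isLt
  rcases hl0.eq_or_lt with h | h
  · have hi : i.val ≠ 0 := by
      intro hi
      have : (fun p => ∏ j : Fin i.val, lam p (Fin.castLE i.isLt.le j)) = fun _ => (1 : ℝ) := by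
        ext p
        have : IsEmpty (Fin i.val) := by rw [hi]; infer_instance
        exact Finset.prod_of_isEmpty _
      rw [this] at hlt
      have := tendsto_nhds_unique hlt tendsto_const_nhds
      linarith
    refine ⟨0, ?_⟩
    have h1 : Tendsto (fun p => (∏ j : Fin i.val, lam p (Fin.castLE i.isLt.le j)) ^
        ((i.val : ℝ)⁻¹)) atTop (𝓝 0) := by
      have := hlt.rpow_const (p := (i.val : ℝ)⁻¹) (Or.inr (by positivity))
      rwa [← h, Real.zero_rpow (by positivity)] at this
    refine squeeze_zero' ?_ ?_ h1
    · filter_upwards [eventually_gt_atTop (0 : ℝ)] with p hp using h0 p hp i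
    · filter_upwards [eventually_gt_atTop (0 : ℝ)] with p hp
      have h2 : lam p i ^ i.val ≤ ∏ j : Fin i.val, lam p (Fin.castLE i.isLt.le j) := by
        have : lam p i ^ i.val = ∏ j : Fin i.val, lam p i := by simp
        rw [this]
        refine Finset.prod_le_prod (fun _ _ => h0 p hp i) fun j _ => hl p hp ?_
        rw [Fin.le_def]; exact j.isLt.le
      have h3 := Real.rpow_le_rpow (pow_nonneg (h0 p hp i) _) h2
        (by positivity : (0 : ℝ) ≤ (i.val : ℝ)⁻¹)
      rwa [Real.pow_rpow_inv_natCast (h0 p hp i) hi] at h3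
  · refine ⟨m / l, (hmt.div hlt h.ne').congr' ?_⟩
    filter_upwards [hlt.eventually (lt_mem_nhds h)] with p hp
    rw [Pi.div_apply, Fin.prod_univ_castSucc, div_eq_iff hp.ne', mul_comm]
    rfl

lemma sortDesc_of_antitone {x : Fin d → ℝ} (hx : Antitone x) : sortDesc x = x := by
  have h1 : Monotone (x ∘ Fin.revPerm) := fun i j hij => hx (Fin.rev_le_rev.2 hij)
  have h2 := Tuple.unique_monotone (Tuple.monotone_sort x) h1
  ext i
  have := congrFun h2 i.rev
  simpa [sortDesc] using this

lemma filter_Iic (k : Fin d) :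
    Finset.univ.filter (fun j : Fin d => j.val < (Finset.Iic k).card) = Finset.Iic k := by
  ext j
  rw [Fin.card_Iic]
  rw [Finset.mem_filter, Finset.mem_Iic, Fin.le_def]
  exact ⟨fun h => Nat.lt_succ_iff.1 h.2, fun h => ⟨Finset.mem_univ _, Nat.lt_succ_iff.2 h⟩⟩

variable {V W : Matrix (Fin d) (Fin d) ℂ} {a b : Fin d → ℝ}

/-- eigenvalues of the geometric mean of powers -/
noncomputable def gp (V W : Matrix (Fin d) (Fin d) ℂ) (a b : Fin d → ℝ) (p : ℝ) : Fin d → ℝ :=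
  eigsDesc (geoMean (dg V fun i => a i ^ p) (dg W fun i => b i ^ p))

lemma gp_nonneg (hV : V ∈ Matrix.unitaryGroup (Fin d) ℂ) (hW : W ∈ Matrix.unitaryGroup (Fin d) ℂ)
    (ha0 : ∀ i, 0 ≤ a i) (hb0 : ∀ i, 0 ≤ b i)
    (p : ℝ) (i : Fin d) : 0 ≤ gp V W a b p i :=
  eigsDesc_nonneg (geoMean_nonneg hV hW (fun i => Real.rpow_nonneg (ha0 i) p)
    (fun i => Real.rpow_nonneg (hb0 i) p)) i

lemma Gmat_eigs (hV : V ∈ Matrix.unitaryGroup (Fin d) ℂ) (hW : W ∈ Matrix.unitaryGroup (Fin d) ℂ)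
    (ha0 : ∀ i, 0 ≤ a i) (hb0 : ∀ i, 0 ≤ b i)
    {p : ℝ} (hp : 0 < p) :
    eigsDesc (Gmat (dg V a) (dg W b) p) = fun i => gp V W a b p i ^ (2 / p) := by
  have hn := geoMean_nonneg hV hW (fun i => Real.rpow_nonneg (ha0 i) p)
    (fun i => Real.rpow_nonneg (hb0 i) p)
  unfold Gmat
  rw [psdPow_dg hV, psdPow_dg hW]
  obtain ⟨U, hU, h⟩ := eigsDesc_spec (Matrix.nonneg_iff_posSemidef.1 hn).isHermitian
  rw [h, psdPow_dg hU, eigsDesc_dg hU]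
  · rfl
  · intro i j hij
    exact Real.rpow_le_rpow (eigsDesc_nonneg hn j) (eigsDesc_antitone _ hij) (by positivity)

lemma prod_step (hV : V ∈ Matrix.unitaryGroup (Fin d) ℂ) (hW : W ∈ Matrix.unitaryGroup (Fin d) ℂ)
    (ha0 : ∀ i, 0 ≤ a i) (hb0 : ∀ i, 0 ≤ b i)
    {p q : ℝ} (hp : 0 < p) (hpq : p ≤ q) (hq : q ≤ 2 * p) {k : ℕ} (hk : k ≤ d) :
    ∏ j : Fin k, gp V W a b q (Fin.castLE hk j) ^ (2 / q) ≤
      ∏ j : Fin k, gp V W a b p (Fin.castLE hk j) ^ (2 / p) := by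
  have hq0 : 0 < q := hp.trans_le hpq
  have hn := gp_nonneg hV hW ha0 hb0
  rw [Real.finsetProd_rpow _ _ (fun j _ => hn q _), Real.finsetProd_rpow _ _ (fun j _ => hn p _)]
  have h1 := geoMean_ando (r := q / p) hV hW (fun i => Real.rpow_nonneg (ha0 i) p)
    (fun i => Real.rpow_nonneg (hb0 i) p) ((one_le_div hp).2 hpq) ((div_le_iff₀ hp).2 hq) hk
  have hm : ∀ z : ℝ, 0 ≤ z → (z ^ p) ^ (q / p) = z ^ q := by
    intro z hz
    rw [← Real.rpow_mul hz, mul_div_cancel₀ _ hp.ne']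
  simp only [hm _ (ha0 _), hm _ (hb0 _)] at h1
  change ∏ j : Fin k, gp V W a b q (Fin.castLE hk j) ≤
    (∏ j : Fin k, gp V W a b p (Fin.castLE hk j)) ^ (q / p) at h1
  have h2 := Real.rpow_le_rpow (Finset.prod_nonneg fun j _ => hn q _) h1
    (by positivity : 0 ≤ 2 / q)
  rw [← Real.rpow_mul (Finset.prod_nonneg fun j _ => hn p _)] at h2
  have h3 : q / p * (2 / q) = 2 / p := by field_simp
  rw [h3] at h2
  exact h2

lemma prod_anti (hV : V ∈ Matrix.unitaryGroup (Fin d) ℂ) (hW : W ∈ Matrix.unitaryGroup (Fin d) ℂ)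
    (ha0 : ∀ i, 0 ≤ a i) (hb0 : ∀ i, 0 ≤ b i)
    {p q : ℝ} (hp : 0 < p) (hpq : p ≤ q) {k : ℕ} (hk : k ≤ d) :
    ∏ j : Fin k, gp V W a b q (Fin.castLE hk j) ^ (2 / q) ≤
      ∏ j : Fin k, gp V W a b p (Fin.castLE hk j) ^ (2 / p) := by
  have key : ∀ n : ℕ, ∀ q, p ≤ q → q ≤ 2 ^ n * p →
      ∏ j : Fin k, gp V W a b q (Fin.castLE hk j) ^ (2 / q) ≤
      ∏ j : Fin k, gp V W a b p (Fin.castLE hk j) ^ (2 / p) := by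
    intro n
    induction n with
    | zero =>
      intro q h1 h2
      have : q = p := le_antisymm (by simpa using h2) h1
      rw [this]
    | succ n ih =>
      intro q h1 h2
      rcases le_total q (2 * p) with h | h
      · exact prod_step hV hW ha0 hb0 hp h1 h hk
      · have h3 : p ≤ q / 2 := by linarith
        refine (prod_step hV hW ha0 hb0 (p := q / 2) (by linarith) (by linarith)
          (by linarith) hk).trans (ih _ h3 ?_)
        rw [pow_succ] at h2
        linarith
  obtain ⟨n, hn⟩ := pow_unbounded_of_one_lt (q / p) one_lt_two
  exact key n q hpq ((div_le_iff₀ hp).1 hn.le)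

lemma gp_conv (hV : V ∈ Matrix.unitaryGroup (Fin d) ℂ) (hW : W ∈ Matrix.unitaryGroup (Fin d) ℂ)
    (ha0 : ∀ i, 0 ≤ a i) (hb0 : ∀ i, 0 ≤ b i)
    {p : ℝ} (i : Fin d) :
    gp V W a b p i ^ (2 / p) = (gp V W a b p i ^ 2) ^ p⁻¹ := by
  rw [div_eq_mul_inv, Real.rpow_mul (gp_nonneg hV hW ha0 hb0 p i), Real.rpow_two]

lemma low_p (hV : V ∈ Matrix.unitaryGroup (Fin d) ℂ) (hW : W ∈ Matrix.unitaryGroup (Fin d) ℂ)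
    (ha0 : ∀ i, 0 ≤ a i) (hb0 : ∀ i, 0 ≤ b i) (ha : Antitone a) (hb : Antitone b)
    {p : ℝ} (hp : 0 < p) (S : Finset (Fin d)) :
    ∏ i ∈ S, a i.rev * b i ≤ ∏ i ∈ Finset.univ.filter (fun j : Fin d => j.val < S.card),
      gp V W a b p i ^ (2 / p) := by
  have h1 := geoMean_lower hV hW (fun i => Real.rpow_nonneg (ha0 i) p)
    (fun i => Real.rpow_nonneg (hb0 i) p)
    (fun i j hij => Real.rpow_le_rpow (ha0 _) (ha hij) hp.le)
    (fun i j hij => Real.rpow_le_rpow (hb0 _) (hb hij) hp.le) S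
  simp only [gp_conv hV hW ha0 hb0]
  rw [Real.finsetProd_rpow _ _ (fun j _ => sq_nonneg _)]
  simp only [← Real.mul_rpow (ha0 _) (hb0 _)] at h1
  rw [Real.finsetProd_rpow _ _ (fun j _ => mul_nonneg (ha0 _) (hb0 _))] at h1
  have hn : 0 ≤ ∏ i ∈ S, a i.rev * b i :=
    Finset.prod_nonneg fun j _ => mul_nonneg (ha0 _) (hb0 _)
  have h2 := Real.rpow_le_rpow (Real.rpow_nonneg hn p) h1 (inv_nonneg.2 hp.le)
  rwa [Real.rpow_rpow_inv hn hp.ne'] at h2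

lemma up_p (hV : V ∈ Matrix.unitaryGroup (Fin d) ℂ) (hW : W ∈ Matrix.unitaryGroup (Fin d) ℂ)
    (ha0 : ∀ i, 0 ≤ a i) (hb0 : ∀ i, 0 ≤ b i) (ha : Antitone a) (hb : Antitone b)
    {p : ℝ} (hp : 0 < p) (S : Finset (Fin d)) :
    ∏ i ∈ S, gp V W a b p i ^ (2 / p) ≤ (∏ i ∈ S, a i) *
      ∏ i ∈ Finset.univ.filter (fun j : Fin d => j.val < S.card), b i := by
  have h1 := geoMean_upper hV hW (fun i => Real.rpow_nonneg (ha0 i) p)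
    (fun i => Real.rpow_nonneg (hb0 i) p)
    (fun i j hij => Real.rpow_le_rpow (ha0 _) (ha hij) hp.le)
    (fun i j hij => Real.rpow_le_rpow (hb0 _) (hb hij) hp.le) S
  simp only [gp_conv hV hW ha0 hb0]
  rw [Real.finsetProd_rpow _ _ (fun j _ => sq_nonneg _)]
  have hna : 0 ≤ ∏ i ∈ S, a i := Finset.prod_nonneg fun j _ => ha0 _
  have hnb : 0 ≤ ∏ i ∈ Finset.univ.filter (fun j : Fin d => j.val < S.card), b i :=
    Finset.prod_nonneg fun j _ => hb0 _
  rw [Real.finsetProd_rpow _ _ (fun j _ => ha0 _), Real.finsetProd_rpow _ _ (fun j _ => hb0 _),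
    ← Real.mul_rpow hna hnb] at h1
  have h2 := Real.rpow_le_rpow (Finset.prod_nonneg fun j _ => sq_nonneg _) h1 (inv_nonneg.2 hp.le)
  rwa [Real.rpow_rpow_inv (mul_nonneg hna hnb) hp.ne'] at h2

lemma last_p (hV : V ∈ Matrix.unitaryGroup (Fin d) ℂ) (hW : W ∈ Matrix.unitaryGroup (Fin d) ℂ)
    (ha0 : ∀ i, 0 ≤ a i) (hb0 : ∀ i, 0 ≤ b i) (ha : Antitone a) (hb : Antitone b)
    (hd : 0 < d) {p : ℝ} (hp : 0 < p) :
    a ⟨d - 1, Nat.sub_lt hd one_pos⟩ * b ⟨d - 1, Nat.sub_lt hd one_pos⟩ ≤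
      gp V W a b p ⟨d - 1, Nat.sub_lt hd one_pos⟩ ^ (2 / p) := by
  have h1 := geoMean_last hd hV hW (fun i => Real.rpow_nonneg (ha0 i) p)
    (fun i => Real.rpow_nonneg (hb0 i) p)
    (fun i j hij => Real.rpow_le_rpow (ha0 _) (ha hij) hp.le)
    (fun i j hij => Real.rpow_le_rpow (hb0 _) (hb hij) hp.le)
  rw [gp_conv hV hW ha0 hb0]
  rw [← Real.mul_rpow (ha0 _) (hb0 _)] at h1
  have hn := mul_nonneg (ha0 ⟨d - 1, Nat.sub_lt hd one_pos⟩) (hb0 ⟨d - 1, Nat.sub_lt hd one_pos⟩)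
  have h2 := Real.rpow_le_rpow (Real.rpow_nonneg hn p) h1 (inv_nonneg.2 hp.le)
  rwa [Real.rpow_rpow_inv hn hp.ne'] at h2

end Assembly

theorem geometric_mean_eigenvalue_limits_exist
    {d : ℕ} (hd : 0 < d) (A B V W : Matrix (Fin d) (Fin d) ℂ) (a b : Fin d → ℝ)
    (hA : A.PosSemidef) (hB : B.PosSemidef)
    (hV : V ∈ Matrix.unitaryGroup (Fin d) ℂ)
    (hW : W ∈ Matrix.unitaryGroup (Fin d) ℂ)
    (ha : Antitone a) (hb : Antitone b)
    (ha0 : ∀ i, 0 ≤ a i) (hb0 : ∀ i, 0 ≤ b i)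
    (hAd : A = V * Matrix.diagonal (fun i => (a i : ℂ)) * Vᴴ)
    (hBd : B = W * Matrix.diagonal (fun i => (b i : ℂ)) * Wᴴ) :
    ∃ lamhat : Fin d → ℝ,
      (∀ i, Tendsto (fun p : ℝ => eigsDesc (Gmat A B p) i) atTop (𝓝 (lamhat i))) ∧
      Antitone lamhat ∧
      lamhat ⟨0, hd⟩ ≤ a ⟨0, hd⟩ * b ⟨0, hd⟩ ∧
      a ⟨d - 1, Nat.sub_lt hd one_pos⟩ * b ⟨d - 1, Nat.sub_lt hd one_pos⟩ ≤
        lamhat ⟨d - 1, Nat.sub_lt hd one_pos⟩ ∧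
      IsLogMaj (fun i => a i * b i.rev) lamhat ∧
      IsLogMaj lamhat (fun i => a i * b i) := by
  have hAd' : A = dg V a := hAd
  have hBd' : B = dg W b := hBd
  have hE : ∀ p, 0 < p → eigsDesc (Gmat A B p) = fun i => gp V W a b p i ^ (2 / p) := by
    intro p hp
    rw [hAd', hBd', Gmat_eigs hV hW ha0 hb0 hp]
  have hconv := conv_of_prod (fun p => eigsDesc (Gmat A B p)) (fun p _ => eigsDesc_antitone _)
    (fun p hp i => by
      simp only [hE p hp]
      exact Real.rpow_nonneg (gp_nonneg hV hW ha0 hb0 p i) _)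
    (fun k hk p q hp hpq => by
      simp only [hE p hp, hE q (hp.trans_le hpq)]
      exact prod_anti hV hW ha0 hb0 hp hpq hk)
  choose lam hlam using hconv
  have hanti : Antitone lam := fun i j hij =>
    le_of_tendsto_of_tendsto' (hlam j) (hlam i) fun p => eigsDesc_antitone _ hij
  have hlow : ∀ S : Finset (Fin d), ∏ i ∈ S, a i.rev * b i ≤
      ∏ i ∈ Finset.univ.filter (fun j : Fin d => j.val < S.card), lam i := by
    intro S
    refine ge_of_tendsto (tendsto_finsetProd _ fun i _ => hlam i) ?_
    filter_upwards [eventually_gt_atTop (0 : ℝ)] with p hp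
    simp only [hE p hp]
    exact low_p hV hW ha0 hb0 ha hb hp S
  have hup : ∀ S : Finset (Fin d), ∏ i ∈ S, lam i ≤ (∏ i ∈ S, a i) *
      ∏ i ∈ Finset.univ.filter (fun j : Fin d => j.val < S.card), b i := by
    intro S
    refine le_of_tendsto (tendsto_finsetProd _ fun i _ => hlam i) ?_
    filter_upwards [eventually_gt_atTop (0 : ℝ)] with p hp
    simp only [hE p hp]
    exact up_p hV hW ha0 hb0 ha hb hp S
  have hupI : ∀ k : Fin d, ∏ i ∈ Finset.Iic k, lam i ≤ ∏ i ∈ Finset.Iic k, a i * b i := by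
    intro k
    have := hup (Finset.Iic k)
    rwa [filter_Iic, ← Finset.prod_mul_distrib] at this
  have hfu : Finset.univ.filter (fun j : Fin d => j.val < (Finset.univ : Finset (Fin d)).card) =
      Finset.univ := by
    ext j; simp
  have hra : ∏ i : Fin d, a i.rev = ∏ i, a i := Equiv.prod_comp Fin.revPerm a
  have hrb : ∏ i : Fin d, b i.rev = ∏ i, b i := Equiv.prod_comp Fin.revPerm b
  have htot : ∏ i, lam i = ∏ i, a i * b i := by
    refine le_antisymm ?_ ?_
    · have := hup Finset.univ
      rwa [hfu, ← Finset.prod_mul_distrib] at this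
    · have := hlow Finset.univ
      rwa [hfu, Finset.prod_mul_distrib, hra, ← Finset.prod_mul_distrib] at this
  refine ⟨lam, hlam, hanti, ?_, ?_, ⟨?_, ?_⟩, ⟨?_, htot⟩⟩
  · have h := hupI ⟨0, hd⟩
    have hI : Finset.Iic (⟨0, hd⟩ : Fin d) = {⟨0, hd⟩} := by
      ext j; simp [Fin.le_def, Fin.ext_iff]
    rwa [hI, Finset.prod_singleton, Finset.prod_singleton] at h
  · refine ge_of_tendsto (hlam _) ?_
    filter_upwards [eventually_gt_atTop (0 : ℝ)] with p hp
    simp only [hE p hp]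
    exact last_p hV hW ha0 hb0 ha hb hd hp
  · intro k
    rw [sortDesc_of_antitone hanti]
    set x : Fin d → ℝ := fun i => a i * b i.rev with hx
    let τ : Fin d ↪ Fin d :=
      ((Fin.revPerm.trans (Tuple.sort x)).trans Fin.revPerm).toEmbedding
    have h := hlow ((Finset.Iic k).map τ)
    rw [Finset.card_map, filter_Iic, Finset.prod_map] at h
    refine le_trans (le_of_eq ?_) h
    refine Finset.prod_congr rfl fun i _ => ?_
    simp [sortDesc, hx, τ]
  · rw [htot, Finset.prod_mul_distrib, hrb, ← Finset.prod_mul_distrib]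
  · intro k
    rw [sortDesc_of_antitone hanti, sortDesc_of_antitone (x := fun i => a i * b i)]
    · exact hupI k
    · exact fun i j hij => mul_le_mul (ha hij) (hb hij) (hb0 _) (ha0 _)
end
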